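/- arXiv:2111.08048 — 4 statements merged into one kernel-verified Lean document; each statement's English description precedes it below -/
import Mathlib

section
/- Let E be an integer m×N matrix and let I ⊆ [N] be any set of columns designated integral. Then every element g of the mixed Graver basis G_X(E) satisfies ‖g‖₁ ≤ (2‖E‖∞ (2m‖E‖∞ + 1)^m + 1)^m. -/
/-!
A circuit is conformally minimal among the integral vectors of the kernel, so it suffices to bound
a vector `g` that is conformally minimal in the mixed kernel and whose integral part is nonzero.
Giving each column the sign of `g`, regard `|g|` as a weighting of the signed columns with sum zero,
and let `D = ‖E‖∞`. Merging the continuous coordinates with equal signed columns affects neither the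
norm nor the minimality. Minimality then forbids that a zero column or two opposite columns carry
continuous weight, so at most `H = ((2D + 1) ^ m - 1) / 2` weights are fractional.

Take `⌊|g j|⌋` copies of each signed column. Their sum has norm at most `D * H`, since the
fractional parts balance it. By the Steinitz lemma the copies can be ordered so that every partial
sum has norm at most `m * D + D * H`. A repeated partial sum would yield a proper conformal part of
`g` in the mixed kernel, so there are at most `(2 * (m * D + D * H) + 1) ^ m` copies, and the
fractional parts contribute at most `H` more.
-/

open Matrix BigOperators

/-- The ℓ₁-norm of a real vector. -/
def vnorm1 {ι : Type*} [Fintype ι] (x : ι → ℝ) : ℝ := ∑ i, |x i|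

/-- The largest absolute value of an entry of an integer matrix. -/
def matNormInf {R C : Type*} [Fintype R] [Fintype C] (E : Matrix R C ℤ) : ℕ :=
  Finset.univ.sup fun p : R × C => (E p.1 p.2).natAbs

/-- `x` is conformal to `y` : componentwise `|x i| ≤ |y i|` and `x i * y i ≥ 0`. -/
def ConformalTo {ι : Type*} (x y : ι → ℝ) : Prop :=
  ∀ i, |x i| ≤ |y i| ∧ 0 ≤ x i * y i

/-- The mixed kernel of an integer matrix `E` with integral columns `I`. -/
def MixedKer {R C : Type*} [Fintype C] [DecidableEq C]
    (E : Matrix R C ℤ) (I : Finset C) (x : C → ℝ) : Prop :=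
  (E.map (Int.cast : ℤ → ℝ)).mulVec x = 0 ∧ ∀ i ∈ I, ∃ z : ℤ, x i = z

/-- `g` is a circuit of the integer matrix `A` : nonzero, integral, in the kernel,
with coprime entries and inclusion-minimal support among nonzero kernel elements. -/
def IsCircuit {R C : Type*} [Fintype C] (A : Matrix R C ℤ) (g : C → ℤ) : Prop :=
  g ≠ 0 ∧ A.mulVec g = 0 ∧ (Finset.univ.gcd fun i => (g i).natAbs) = 1 ∧
  ∀ y : C → ℝ, y ≠ 0 → (A.map (Int.cast : ℤ → ℝ)).mulVec y = 0 →
    ¬ (Function.support y ⊂ Function.support fun i => ((g i : ℝ)))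

/-- Membership in the mixed Graver basis `G_X(E)` of `E` w.r.t. integral columns `I`. -/
def InMixedGraver {R C : Type*} [Fintype C] [DecidableEq C]
    (E : Matrix R C ℤ) (I : Finset C) (g : C → ℝ) : Prop :=
  (MixedKer E I g ∧ (∃ i ∈ I, g i ≠ 0) ∧
    ∀ y, MixedKer E I y → y ≠ 0 → y ≠ g → ¬ ConformalTo y g) ∨
  ((∀ i ∈ I, g i = 0) ∧
    ∃ gz : {i : C // i ∉ I} → ℤ, (∀ i : {i : C // i ∉ I}, g i.1 = gz i) ∧
      IsCircuit (E.submatrix id (Subtype.val : {i : C // i ∉ I} → C)) gz)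

/-- `x = h + g` is a one-fat decomposition of `x ∈ ker_X(E)` with fat element `h`. -/
def OneFatDecomp {R C : Type*} [Fintype C] [DecidableEq C]
    (E : Matrix R C ℤ) (I : Finset C) (x h g : C → ℝ) : Prop :=
  x = h + g ∧ ConformalTo h x ∧ ConformalTo g x ∧ MixedKer E I h ∧
  (E.map (Int.cast : ℤ → ℝ)).mulVec g = 0 ∧ (∀ i, ∃ z : ℤ, g i = z)

open Filter Finset Topology

section BasicSolutions

variable {ι W : Type*} [AddCommGroup W] [Module ℝ W]

lemma eventually_add_smul_le [Finite ι] {x y b : ι → ℝ} (hx : x ≤ b)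
    (hy : ∀ i, y i ≠ 0 → x i < b i) : ∀ᶠ ε in 𝓝 (0 : ℝ), x + ε • y ≤ b := by
  simp only [Pi.le_def, Pi.add_apply, Pi.smul_apply, smul_eq_mul]
  refine Filter.eventually_all.2 fun i ↦ ?_
  by_cases hi : y i = 0
  · simpa [hi] using hx i
  · have hcont : Continuous fun ε : ℝ ↦ x i + ε * y i := by fun_prop
    have hlim : Tendsto (fun ε : ℝ ↦ x i + ε * y i) (𝓝 0) (𝓝 (x i)) := by
      simpa using hcont.tendsto 0
    exact (hlim.eventually_lt_const (hy i hi)).mono fun _ ↦ le_of_lt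

lemma exists_pos_add_sub_smul_mem_Icc [Finite ι] {a b x y : ι → ℝ} (hx : x ∈ Set.Icc a b)
    (hy : ∀ i, y i ≠ 0 → a i < x i ∧ x i < b i) :
    ∃ ε : ℝ, 0 < ε ∧ x + ε • y ∈ Set.Icc a b ∧ x - ε • y ∈ Set.Icc a b := by
  have hneg : Tendsto (fun ε : ℝ ↦ -ε) (𝓝 0) (𝓝 0) := by simpa using tendsto_neg (0 : ℝ)
  have hupper := eventually_add_smul_le hx.2 fun i hi ↦ (hy i hi).2
  have hlower := eventually_add_smul_le (neg_le_neg hx.1)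
    fun i hi ↦ neg_lt_neg (hy i hi).1
  have hall := ((hupper.and (hneg.eventually hupper)).and
    (hlower.and (hneg.eventually hlower))).filter_mono (nhdsWithin_le_nhds (s := Set.Ioi 0))
  obtain ⟨ε, ⟨⟨hub, hub'⟩, hlb', hlb⟩, hε⟩ := (hall.and self_mem_nhdsWithin).exists
  refine ⟨ε, hε, ⟨?_, hub⟩, ⟨?_, ?_⟩⟩
  · exact neg_le_neg_iff.1 (by simpa [neg_add, add_comm] using hlb)
  · exact neg_le_neg_iff.1 (by simpa [neg_sub, sub_eq_add_neg, add_comm] using hlb')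
  · simpa [sub_eq_add_neg] using hub'

variable [FiniteDimensional ℝ W] (f : (ι → ℝ) →ₗ[ℝ] W)

lemma exists_ne_zero_map_eq_zero_of_finrank_lt_card {s : Finset ι}
    (hs : Module.finrank ℝ W < #s) :
    ∃ y : ι → ℝ, y ≠ 0 ∧ f y = 0 ∧ ∀ i, y i ≠ 0 → i ∈ s := by
  set e : (s → ℝ) →ₗ[ℝ] ι → ℝ := Function.ExtendByZero.linearMap ℝ Subtype.val
  have hker : LinearMap.ker (f ∘ₗ e) ≠ ⊥ := LinearMap.ker_ne_bot_of_finrank_lt (by simpa using hs)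
  obtain ⟨z, hz, hz0⟩ := (Submodule.ne_bot_iff _).1 hker
  have hez (i : s) : e z i = z i := Subtype.val_injective.extend_apply z 0 i
  refine ⟨e z, fun h ↦ hz0 (funext fun i ↦ ?_), hz, fun i hi ↦ ?_⟩
  · rw [← hez, h, Pi.zero_apply, Pi.zero_apply]
  · contrapose! hi
    have hi' : ¬∃ a : s, a.1 = i := by simpa using hi
    exact Function.extend_apply' z (0 : ι → ℝ) i hi'

variable [Fintype ι]

lemma card_filter_lt_lt_le_finrank_of_mem_extremePoints {a b x : ι → ℝ} {w : W}
    (hx : x ∈ (Set.Icc a b ∩ {l | f l = w}).extremePoints ℝ) :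
    #{i | a i < x i ∧ x i < b i} ≤ Module.finrank ℝ W := by
  by_contra! hcard
  obtain ⟨⟨hxab, hxw⟩, hext⟩ := mem_extremePoints.1 hx
  obtain ⟨y, hy0, hfy, hy⟩ := exists_ne_zero_map_eq_zero_of_finrank_lt_card f hcard
  obtain ⟨ε, hε, hadd, hsub⟩ :=
    exists_pos_add_sub_smul_mem_Icc hxab fun i hi ↦ by simpa using hy i hi
  have hmid : x ∈ openSegment ℝ (x + ε • y) (x - ε • y) :=
    ⟨1 / 2, 1 / 2, by norm_num, by norm_num, by norm_num, by module⟩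
  have hfix := (hext _ ⟨hadd, by simpa [hfy] using hxw⟩ _ ⟨hsub, by simpa [hfy] using hxw⟩ hmid).1
  exact smul_ne_zero hε.ne' hy0 (add_eq_left.1 hfix)

lemma exists_mem_Icc_map_eq_card_filter_lt_lt_le {a b l : ι → ℝ} (hl : l ∈ Set.Icc a b) :
    ∃ l' ∈ Set.Icc a b, f l' = f l ∧ #{i | a i < l' i ∧ l' i < b i} ≤ Module.finrank ℝ W := by
  have hclosed : IsClosed {x | f x = f l} := by
    have hpre : {x | f x = f l} = (· - l) ⁻¹' (LinearMap.ker f : Set (ι → ℝ)) := by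
      ext x
      simp [sub_eq_zero]
    rw [hpre]
    exact (LinearMap.ker f).closed_of_finiteDimensional.preimage (by fun_prop)
  obtain ⟨l', hl'⟩ := (isCompact_Icc.inter_right hclosed).extremePoints_nonempty ⟨l, hl, rfl⟩
  exact ⟨l', hl'.1.1, hl'.1.2, card_filter_lt_lt_le_finrank_of_mem_extremePoints f hl'⟩

end BasicSolutions

section Steinitz

lemma exists_eq_zero_of_sum_eq_card_sub {ι : Type*} {l : ι → ℝ} {A : Finset ι} {k : ℕ}
    (hA : A.Nonempty) (hk : 0 < k) (h0 : ∀ i ∈ A, 0 ≤ l i) (h1 : ∀ i ∈ A, l i ≤ 1)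
    (hsum : ∑ i ∈ A, l i = (#A - k : ℕ)) (hcard : #{i ∈ A | 0 < l i ∧ l i < 1} ≤ k) :
    ∃ i ∈ A, l i = 0 := by
  by_contra! hne
  have hpos (i) (hi : i ∈ A) : 0 < l i := (h0 i hi).lt_of_ne' (hne i hi)
  have hkA : k < #A := by
    have := sum_pos hpos hA
    rw [hsum, Nat.cast_pos] at this
    omega
  have hdefect : ∑ i ∈ A with 0 < l i ∧ l i < 1, (1 - l i) = k := by
    have hall : ∑ i ∈ A, (1 - l i) = k := by
      rw [sum_sub_distrib, hsum, Nat.cast_sub hkA.le]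
      simp
    rw [← hall]
    refine sum_filter_of_ne fun i hi hli ↦ ⟨hpos i hi, (h1 i hi).lt_of_ne fun h ↦ hli ?_⟩
    rw [h, sub_self]
  have hfrac : {i ∈ A | 0 < l i ∧ l i < 1}.Nonempty :=
    nonempty_of_sum_ne_zero (hdefect.trans_ne (by positivity))
  have hlt := sum_lt_sum_of_nonempty hfrac (f := fun i ↦ 1 - l i) (g := fun _ ↦ (1 : ℝ))
    fun i hi ↦ by linarith [(mem_filter.1 hi).2.1]
  rw [hdefect, sum_const, nsmul_one, Nat.cast_lt] at hlt
  omega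

lemma exists_monotone_card_eq_of_forall_exists_erase {ι : Type*} [Fintype ι] [DecidableEq ι]
    {P : Finset ι → Prop} (huniv : P univ)
    (herase : ∀ A, A.Nonempty → P A → ∃ i ∈ A, P (A.erase i)) :
    ∃ B : ℕ → Finset ι, Monotone B ∧ ∀ k ≤ Fintype.card ι, #(B k) = k ∧ P (B k) := by
  have hstep (A : {A // P A}) : ∃ A' : {A // P A}, A' ≤ A ∧ #A'.1 = #A.1 - 1 := by
    obtain ⟨A, hA⟩ := A
    obtain rfl | hne := A.eq_empty_or_nonempty
    · exact ⟨⟨∅, hA⟩, le_rfl, rfl⟩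
    · obtain ⟨i, hi, hPi⟩ := herase A hne hA
      exact ⟨⟨A.erase i, hPi⟩, erase_subset i A, card_erase_of_mem hi⟩
  choose next hle hcard using hstep
  have hcard_iterate (j : ℕ) : #(next^[j] ⟨univ, huniv⟩).1 = Fintype.card ι - j := by
    induction j with
    | zero => rfl
    | succ j ih => rw [Function.iterate_succ_apply', hcard, ih, Nat.sub_sub]
  refine ⟨fun k ↦ (next^[Fintype.card ι - k] ⟨univ, huniv⟩).1, fun j k hjk ↦ ?_,
    fun k hk ↦ ⟨?_, ?_⟩⟩
  · exact Function.antitone_iterate_of_le_id hle (Nat.sub_le_sub_left hjk _) _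
  · rw [hcard_iterate, Nat.sub_sub_self hk]
  · exact (next^[Fintype.card ι - k] ⟨univ, huniv⟩).2

variable {ι V : Type*} [Fintype ι] [NormedAddCommGroup V] [NormedSpace ℝ V]

/-- The invariant of the Grinberg–Sevastyanov proof of the Steinitz lemma, for a family `x` of `n`
vectors in dimension `d`: weights `l ∈ [0, 1]^A` of total `#A - d` under which the `x i` sum to
`(#A - d) / n` times the sum of the whole family. Weights are functions on `ι` vanishing off `A`,
and the two conditions are the components of one equation in `ℝ × V`. The subtraction is truncated,
so that the sets with fewer than `d` elements qualify with `l = 0`. -/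
def HasSteinitzWeights (x : ι → V) (A : Finset ι) : Prop :=
  ∃ l ∈ Set.Icc (0 : ι → ℝ) (Set.indicator A 1),
    Fintype.linearCombination ℝ (fun i ↦ ((1 : ℝ), x i)) l =
      ((#A - Module.finrank ℝ V : ℕ) / Fintype.card ι : ℝ) • ((Fintype.card ι : ℝ), ∑ i, x i)

variable {x : ι → V} {A : Finset ι}

lemma hasSteinitzWeights_univ (x : ι → V) : HasSteinitzWeights x univ := by
  set c : ℝ := (Fintype.card ι - Module.finrank ℝ V : ℕ) / Fintype.card ι with hc
  have hc0 : 0 ≤ c := by positivity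
  have hc1 : c ≤ 1 :=
    div_le_one_of_le₀ (Nat.cast_le.2 (Nat.sub_le _ _)) (Nat.cast_nonneg _)
  refine ⟨fun _ ↦ c, ⟨fun _ ↦ hc0, fun i ↦ by simpa using hc1⟩, ?_⟩
  rw [Fintype.linearCombination_apply, ← smul_sum, card_univ, ← hc]
  congr 1
  ext <;> simp [Prod.fst_sum, Prod.snd_sum]

lemma sum_eq_of_linearCombination_eq {l : ι → ℝ} {t : ℕ} (ht : t ≤ Fintype.card ι)
    (hl : Fintype.linearCombination ℝ (fun i ↦ ((1 : ℝ), x i)) l =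
      (t / Fintype.card ι : ℝ) • ((Fintype.card ι : ℝ), ∑ i, x i)) :
    ∑ i, l i = t ∧ ∑ i, l i • x i = (t / Fintype.card ι : ℝ) • ∑ i, x i := by
  rw [Fintype.linearCombination_apply, Prod.ext_iff] at hl
  simp only [Prod.fst_sum, Prod.snd_sum, Prod.smul_mk, smul_eq_mul, mul_one] at hl
  refine ⟨hl.1.trans (div_mul_cancel_of_imp fun h ↦ ?_), hl.2⟩
  simp only [Nat.cast_eq_zero] at h ⊢
  omega

lemma sum_eq_of_mem_Icc_indicator {M : Type*} [AddCommMonoid M] [Module ℝ M] {l : ι → ℝ}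
    (hl : l ∈ Set.Icc (0 : ι → ℝ) (Set.indicator A 1)) (y : ι → M) :
    ∑ i ∈ A, l i • y i = ∑ i, l i • y i := by
  refine sum_subset (subset_univ A) fun i _ hi ↦ ?_
  have hle : l i ≤ 0 := by simpa [hi] using hl.2 i
  rw [hle.antisymm (hl.1 i), zero_smul]

lemma HasSteinitzWeights.exists_erase [FiniteDimensional ℝ V] [DecidableEq ι]
    (hA : HasSteinitzWeights x A) (hne : A.Nonempty) :
    ∃ i ∈ A, HasSteinitzWeights x (A.erase i) := by
  obtain ⟨l, hl, hlx⟩ := hA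
  set d := Module.finrank ℝ V
  set q : ℝ := (#A - (d + 1) : ℕ) / (#A - d : ℕ)
  have hq0 : 0 ≤ q := by positivity
  have hq1 : q ≤ 1 := div_le_one_of_le₀ (Nat.cast_le.2 (by omega)) (Nat.cast_nonneg _)
  have hql : q • l ∈ Set.Icc (0 : ι → ℝ) (Set.indicator A 1) :=
    ⟨smul_nonneg hq0 hl.1, (smul_le_of_le_one_left hl.1 hq1).trans hl.2⟩
  obtain ⟨l', hl', hmap, hcard⟩ := exists_mem_Icc_map_eq_card_filter_lt_lt_le
    (Fintype.linearCombination ℝ fun i ↦ ((1 : ℝ), x i)) hql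
  have hq : q * (#A - d : ℕ) = (#A - (d + 1) : ℕ) := div_mul_cancel_of_imp fun h ↦ by
    simp only [Nat.cast_eq_zero] at h ⊢
    omega
  rw [map_smul, hlx, smul_smul, ← mul_div_assoc, hq] at hmap
  have hsum : ∑ i ∈ A, l' i = (#A - (d + 1) : ℕ) := by
    rw [← (sum_eq_of_linearCombination_eq ((Nat.sub_le _ _).trans (card_le_univ A)) hmap).1]
    simpa using sum_eq_of_mem_Icc_indicator hl' fun _ ↦ (1 : ℝ)
  have hle1 (i) (hi : i ∈ A) : l' i ≤ 1 := by simpa [hi] using hl'.2 i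
  have hfrac : #{i ∈ A | 0 < l' i ∧ l' i < 1} ≤ d + 1 := by
    rw [Module.finrank_prod, Module.finrank_self, add_comm] at hcard
    refine (card_le_card fun i hi ↦ ?_).trans hcard
    obtain ⟨hiA, hi⟩ := mem_filter.1 hi
    simpa [hiA] using hi
  obtain ⟨i, hi, hi0⟩ := exists_eq_zero_of_sum_eq_card_sub hne d.succ_pos
    (fun i _ ↦ hl'.1 i) hle1 hsum hfrac
  refine ⟨i, hi, l', ⟨hl'.1, fun j ↦ ?_⟩, ?_⟩
  · obtain rfl | hji := eq_or_ne j i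
    · simp [hi0]
    · simpa [Set.indicator_apply, hji] using hl'.2 j
  · rw [hmap, card_erase_of_mem hi, Nat.sub_sub, add_comm 1]

lemma HasSteinitzWeights.norm_sum_le (hA : HasSteinitzWeights x A) {D : ℝ} (hD : 0 ≤ D)
    (hx : ∀ i, ‖x i‖ ≤ D) : ‖∑ i ∈ A, x i‖ ≤ Module.finrank ℝ V * D + ‖∑ i, x i‖ := by
  obtain ⟨l, hl, hlx⟩ := hA
  have hsubA : #A - Module.finrank ℝ V ≤ Fintype.card ι :=
    (Nat.sub_le _ _).trans (card_le_univ A)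
  obtain ⟨hsum, hsumx⟩ := sum_eq_of_linearCombination_eq hsubA hlx
  set c : ℝ := (#A - Module.finrank ℝ V : ℕ) / Fintype.card ι
  have hc0 : 0 ≤ c := by positivity
  have hc1 : c ≤ 1 := div_le_one_of_le₀ (Nat.cast_le.2 hsubA) (Nat.cast_nonneg _)
  have hl1 (i) (hi : i ∈ A) : 0 ≤ 1 - l i := by simpa [hi] using hl.2 i
  have hdefect : ∑ i ∈ A, (1 - l i) ≤ Module.finrank ℝ V := by
    have hlA : ∑ i ∈ A, l i = ∑ i, l i := by
      simpa using sum_eq_of_mem_Icc_indicator hl fun _ ↦ (1 : ℝ)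
    rw [sum_sub_distrib, hlA, hsum, sum_const, nsmul_one, sub_le_iff_le_add]
    exact_mod_cast le_add_tsub
  have hsplit : ∑ i ∈ A, x i = ∑ i ∈ A, (1 - l i) • x i + c • ∑ i, x i := by
    rw [← hsumx, ← sum_eq_of_mem_Icc_indicator hl, ← sum_add_distrib]
    exact sum_congr rfl fun i _ ↦ by module
  calc ‖∑ i ∈ A, x i‖ ≤ ∑ i ∈ A, (1 - l i) * D + ‖∑ i, x i‖ := by
        rw [hsplit]
        refine norm_add_le_of_le (norm_sum_le_of_le _ fun i hi ↦ ?_) ?_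
        · rw [norm_smul, Real.norm_of_nonneg (hl1 i hi)]
          exact mul_le_mul_of_nonneg_left (hx i) (hl1 i hi)
        · rw [norm_smul, Real.norm_of_nonneg hc0]
          exact mul_le_of_le_one_left (norm_nonneg _) hc1
    _ ≤ Module.finrank ℝ V * D + ‖∑ i, x i‖ := by
        rw [← sum_mul]
        gcongr

/-- The chain `B` of the sets of the first `k` members encodes an enumeration of the family. -/
theorem exists_monotone_norm_sum_le_finrank_mul_add [FiniteDimensional ℝ V] {D : ℝ} (hD : 0 ≤ D)
    (hx : ∀ i, ‖x i‖ ≤ D) :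
    ∃ B : ℕ → Finset ι, Monotone B ∧ ∀ k ≤ Fintype.card ι,
      #(B k) = k ∧ ‖∑ i ∈ B k, x i‖ ≤ Module.finrank ℝ V * D + ‖∑ i, x i‖ := by
  classical
  obtain ⟨B, hmono, hB⟩ := exists_monotone_card_eq_of_forall_exists_erase
    (hasSteinitzWeights_univ x) fun A hne hA ↦ hA.exists_erase hne
  exact ⟨B, hmono, fun k hk ↦ ⟨(hB k hk).1, (hB k hk).2.norm_sum_le hD hx⟩⟩

end Steinitz

section IntegerVectors

variable {R : Type*} [Fintype R]

lemma card_le_of_forall_norm_le {M : ℕ} {T : Finset (R → ℤ)} (hT : ∀ c ∈ T, ‖c‖ ≤ M) :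
    #T ≤ (2 * M + 1) ^ Fintype.card R := by
  classical
  have hsub : T ⊆ Icc (fun _ ↦ -(M : ℤ)) fun _ ↦ (M : ℤ) := fun c hc ↦ by
    have hcM (r) : |c r| ≤ M := by
      have := (norm_le_pi_norm c r).trans (hT c hc)
      rw [Int.norm_eq_abs] at this
      exact_mod_cast this
    exact mem_Icc.2 ⟨fun r ↦ (abs_le.1 (hcM r)).1, fun r ↦ (abs_le.1 (hcM r)).2⟩
  refine (card_le_card hsub).trans_eq ?_
  rw [Pi.card_Icc, prod_const, card_univ, Int.card_Icc]
  congr 1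
  omega

lemma two_mul_card_add_one_le {D : ℕ} {T : Finset (R → ℤ)} (hT : ∀ c ∈ T, ‖c‖ ≤ D)
    (hneg : ∀ c ∈ T, -c ∉ T) : 2 * #T + 1 ≤ (2 * D + 1) ^ Fintype.card R := by
  classical
  have h0 : 0 ∉ T := fun h ↦ hneg 0 h (by simpa using h)
  have hdisj : Disjoint T (T.image Neg.neg) := by
    rw [Finset.disjoint_right]
    simpa using hneg
  calc 2 * #T + 1 = #(insert 0 (T ∪ T.image Neg.neg)) := by
        rw [card_insert_of_notMem (by simpa using h0), card_union_of_disjoint hdisj,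
          card_image_of_injective _ neg_injective, two_mul]
    _ ≤ (2 * D + 1) ^ Fintype.card R := by
        refine card_le_of_forall_norm_le fun c hc ↦ ?_
        simp only [mem_insert, mem_union, mem_image] at hc
        obtain rfl | hc | ⟨c, hc, rfl⟩ := hc
        · simp
        · exact hT c hc
        · simpa using hT c hc

lemma norm_intCast_comp (c : R → ℤ) : ‖fun r ↦ (c r : ℝ)‖ = ‖c‖ := by
  simp only [Pi.norm_def, nnnorm, Int.norm_cast_real]

/-- Otherwise two partial sums of a Steinitz enumeration would agree, and the block of vectors
between them would sum to zero. -/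
theorem card_le_of_forall_sum_ne_zero {ι : Type*} [Fintype ι] {x : ι → R → ℤ} {D S : ℕ}
    (hx : ∀ i, ‖x i‖ ≤ D) (hS : ‖∑ i, x i‖ ≤ S)
    (hne : ∀ C : Finset ι, C.Nonempty → C ≠ univ → ∑ i ∈ C, x i ≠ 0) :
    Fintype.card ι ≤ (2 * (Fintype.card R * D + S) + 1) ^ Fintype.card R := by
  classical
  have hnorm (C : Finset ι) : ‖∑ i ∈ C, fun r ↦ (x i r : ℝ)‖ = ‖∑ i ∈ C, x i‖ := by
    rw [← norm_intCast_comp]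
    congr 1
    ext r
    simp
  obtain ⟨B, hmono, hB⟩ := exists_monotone_norm_sum_le_finrank_mul_add
    (x := fun i r ↦ (x i r : ℝ)) D.cast_nonneg fun i ↦ (norm_intCast_comp (x i)).trans_le (hx i)
  have hinj : Function.Injective fun k : Fin (Fintype.card ι) ↦ ∑ i ∈ B k, x i := by
    refine .of_lt_imp_ne fun a b hab heq ↦ hne (B b \ B a) ?_ ?_ ?_
    · rw [← card_pos, card_sdiff_of_subset (hmono hab.le), (hB b b.2.le).1, (hB a a.2.le).1]
      omega
    · intro huniv
      have hBb : B b = univ := univ_subset_iff.1 (huniv ▸ sdiff_subset)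
      exact b.2.ne ((hB b b.2.le).1.symm.trans (by rw [hBb, card_univ]))
    · rw [sum_sdiff_eq_sub (hmono hab.le), heq, sub_self]
  rw [← Fintype.card_fin (Fintype.card ι), ← card_univ, ← card_image_of_injective _ hinj]
  refine card_le_of_forall_norm_le fun c hc ↦ ?_
  obtain ⟨k, -, rfl⟩ := mem_image.1 hc
  have hk := (hB k k.2.le).2
  rw [hnorm, hnorm, Module.finrank_fintype_fun_eq_card] at hk
  push_cast
  linarith

end IntegerVectors

section Arithmetic

variable {m D H : ℕ}

lemma two_mul_add_add_two_mul_le (hm : m ≠ 0) (hH : 2 * H + 1 ≤ (2 * D + 1) ^ m) :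
    2 * (m * D + D * H) + 1 + 2 * D ≤ 2 * D * (2 * m * D + 1) ^ m + 1 := by
  set P := (2 * m * D + 1) ^ m
  have hmP : 2 * m * D + 1 ≤ P := Nat.le_self_pow hm _
  have hHP : 2 * H + 1 ≤ P :=
    hH.trans (Nat.pow_le_pow_left (by nlinarith [Nat.pos_of_ne_zero hm]) _)
  have h1 := Nat.mul_le_mul_left D hmP
  have h2 := Nat.mul_le_mul_left D hHP
  have h3 : m * D ≤ D * (m * D) := by
    obtain rfl | hD := D.eq_zero_or_pos
    · simp
    · exact Nat.le_mul_of_pos_left _ hD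
  nlinarith

lemma le_two_mul_mul_pow {k Y : ℕ} (hH : 2 * H + 1 ≤ (2 * D + 1) ^ (k + 1)) (hY : 2 * D + 1 ≤ Y) :
    H ≤ 2 * D * Y ^ k := by
  obtain rfl | hD := D.eq_zero_or_pos
  · simpa using hH
  · have hle : 2 * H + 1 ≤ (2 * D + 1) * Y ^ k := by
      rw [pow_succ'] at hH
      exact hH.trans (Nat.mul_le_mul_left _ (Nat.pow_le_pow_left hY _))
    nlinarith [Nat.mul_le_mul_right (Y ^ k) hD]

lemma pow_add_le_pow (hH : 2 * H + 1 ≤ (2 * D + 1) ^ m) :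
    (2 * (m * D + D * H) + 1) ^ m + H ≤ (2 * D * (2 * m * D + 1) ^ m + 1) ^ m := by
  obtain _ | k := m
  · simpa using hH
  have hXY := two_mul_add_add_two_mul_le k.succ_ne_zero hH
  set X := 2 * ((k + 1) * D + D * H) + 1
  set Y := 2 * D * (2 * (k + 1) * D + 1) ^ (k + 1) + 1
  calc X ^ (k + 1) + H ≤ X * Y ^ k + 2 * D * Y ^ k := by
        rw [pow_succ']
        exact add_le_add (Nat.mul_le_mul_left _ (Nat.pow_le_pow_left (by omega) _))
          (le_two_mul_mul_pow hH (by omega))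
    _ = (X + 2 * D) * Y ^ k := by ring
    _ ≤ Y * Y ^ k := Nat.mul_le_mul_right _ hXY
    _ = Y ^ (k + 1) := (pow_succ' Y k).symm

end Arithmetic

section FiberSums

variable {ι κ : Type*}

lemma sum_funOnFinite_map_mul [Fintype ι] [Fintype κ] (π : ι → κ) (w : ι → ℝ) (f : κ → ℝ) :
    ∑ k, FunOnFinite.map π w k * f k = ∑ i, w i * f (π i) := by
  classical
  simp only [FunOnFinite.map_apply_apply, sum_mul]
  rw [← sum_fiberwise univ π fun i ↦ w i * f (π i)]
  exact sum_congr rfl fun k _ ↦ sum_congr rfl fun i hi ↦ by rw [(mem_filter.1 hi).2]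

lemma sum_funOnFinite_map [Fintype ι] [Fintype κ] (π : ι → κ) (w : ι → ℝ) :
    ∑ k, FunOnFinite.map π w k = ∑ i, w i := by
  simpa using sum_funOnFinite_map_mul π w 1

lemma funOnFinite_map_sigmaFst_apply {α : κ → Type*} [Finite κ] [∀ k, Fintype (α k)]
    (w : (Σ k, α k) → ℝ) (k : κ) : FunOnFinite.map Sigma.fst w k = ∑ a, w ⟨k, a⟩ := by
  classical
  have := Fintype.ofFinite κ
  rw [FunOnFinite.map_apply_apply, sum_filter, Fintype.sum_sigma]
  refine (Fintype.sum_eq_single k fun k' hk' ↦ ?_).trans (by simp)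
  simp [hk']

variable [Finite ι] [Finite κ] {π : ι → κ}

lemma funOnFinite_map_apply_of_injOn {J : Set κ} (hπ : Set.InjOn π (π ⁻¹' J)) (w : ι → ℝ) {i : ι}
    (hi : π i ∈ J) : FunOnFinite.map π w (π i) = w i := by
  classical
  have := Fintype.ofFinite ι
  rw [FunOnFinite.map_apply_apply]
  refine sum_eq_single_of_mem i (by simp) fun j hj hji ↦ absurd ?_ hji
  have hj : π j = π i := by simpa using hj
  exact hπ (by rwa [Set.mem_preimage, hj]) hi hj

lemma mem_range_of_funOnFinite_map_ne_zero {w : ι → ℝ} {k : κ} (hk : FunOnFinite.map π w k ≠ 0) :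
    k ∈ Set.range π := by
  classical
  have := Fintype.ofFinite ι
  rw [FunOnFinite.map_apply_apply] at hk
  obtain ⟨i, hi⟩ := nonempty_of_sum_ne_zero hk
  exact ⟨i, (mem_filter.1 hi).2⟩

/-- Each fibre passes on to `y` the proportion of its weight that `d` requires. -/
lemma exists_funOnFinite_map_eq_of_le {w : ι → ℝ} {d : κ → ℝ} (hw : 0 ≤ w) (hd : 0 ≤ d)
    (hdw : d ≤ FunOnFinite.map π w) : ∃ y, 0 ≤ y ∧ y ≤ w ∧ FunOnFinite.map π y = d := by
  classical
  have := Fintype.ofFinite ι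
  set W := FunOnFinite.map π w
  have hW (k) : 0 ≤ W k := (hd k).trans (hdw k)
  refine ⟨fun i ↦ w i * (d (π i) / W (π i)), fun i ↦ ?_, fun i ↦ ?_, funext fun k ↦ ?_⟩
  · exact mul_nonneg (hw i) (div_nonneg (hd _) (hW _))
  · exact mul_le_of_le_one_right (hw i) (div_le_one_of_le₀ (hdw _) (hW _))
  · calc FunOnFinite.map π (fun i ↦ w i * (d (π i) / W (π i))) k
        = ∑ i with π i = k, w i * (d k / W k) := by
          rw [FunOnFinite.map_apply_apply]
          exact sum_congr rfl fun i hi ↦ by rw [(mem_filter.1 hi).2]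
      _ = d k / W k * W k := by
          rw [← sum_mul, ← FunOnFinite.map_apply_apply π w k, mul_comm]
      _ = d k := div_mul_cancel_of_imp fun h ↦ ((hdw k).trans_eq h).antisymm (hd k)

end FiberSums

section Weightings

variable {R ι κ : Type*} [Fintype ι] [Fintype κ]

/-- A kernel vector `d` of the matrix with columns `v k`, with nonnegative entries that are integers
on the index set `J`: the elements of the mixed kernel after a change of signs of the columns. -/
structure IsBalancedWeighting (v : κ → R → ℤ) (J : Set κ) (d : κ → ℝ) : Prop where
  nonneg : 0 ≤ d
  balanced : ∀ r, ∑ k, d k * v k r = 0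
  integral : ∀ k ∈ J, ∃ z : ℤ, d k = z

/-- The counterpart for weightings of the elements of the mixed Graver basis of type (i): for
nonnegative vectors conformality is the coordinatewise order. -/
structure IsMinimalWeighting (v : κ → R → ℤ) (J : Set κ) (w : κ → ℝ) : Prop
    extends IsBalancedWeighting v J w where
  exists_ne : ∃ k ∈ J, w k ≠ 0
  minimal : ∀ d, IsBalancedWeighting v J d → d ≤ w → d = 0 ∨ d = w

variable {v : κ → R → ℤ} {J : Set κ} {w d : κ → ℝ} {π : ι → κ}

lemma IsBalancedWeighting.map {w : ι → ℝ} (hw : IsBalancedWeighting (v ∘ π) (π ⁻¹' J) w) :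
    IsBalancedWeighting v J (FunOnFinite.map π w) := by
  classical
  refine ⟨fun k ↦ ?_, fun r ↦ (sum_funOnFinite_map_mul π w fun k ↦ v k r).trans (hw.balanced r),
    fun k hk ↦ ?_⟩ <;> rw [FunOnFinite.map_apply_apply]
  · exact sum_nonneg fun i _ ↦ hw.nonneg i
  · have hint (i) (hi : i ∈ ({i | π i = k} : Finset ι)) : w i ∈ (Int.castAddHom ℝ).range := by
      obtain ⟨z, hz⟩ := hw.integral i (by simpa [(mem_filter.1 hi).2] using hk)
      exact ⟨z, hz.symm⟩
    obtain ⟨z, hz⟩ := sum_mem hint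
    exact ⟨z, hz.symm⟩

lemma IsMinimalWeighting.map {w : ι → ℝ} (hw : IsMinimalWeighting (v ∘ π) (π ⁻¹' J) w)
    (hπ : Set.InjOn π (π ⁻¹' J)) : IsMinimalWeighting v J (FunOnFinite.map π w) := by
  refine ⟨hw.toIsBalancedWeighting.map, ?_, fun d hd hdw ↦ ?_⟩
  · obtain ⟨i, hi, hwi⟩ := hw.exists_ne
    exact ⟨π i, hi, by rwa [funOnFinite_map_apply_of_injOn hπ w hi]⟩
  · obtain ⟨y, hy0, hyw, rfl⟩ := exists_funOnFinite_map_eq_of_le hw.nonneg hd.nonneg hdw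
    have hy : IsBalancedWeighting (v ∘ π) (π ⁻¹' J) y :=
      ⟨hy0, fun r ↦ (sum_funOnFinite_map_mul π y fun k ↦ v k r).symm.trans (hd.balanced r),
        fun i hi ↦ funOnFinite_map_apply_of_injOn hπ y hi ▸ hd.integral (π i) hi⟩
    refine (hw.minimal y hy hyw).imp ?_ fun h ↦ by rw [h]
    rintro rfl
    classical
    ext k
    simp [FunOnFinite.map_apply_apply]

lemma exists_representative {ι α : Type*} (v : ι → α) (J : Set ι) :
    ∃ ρ : ι → ι, v ∘ ρ = v ∧ ρ ⁻¹' J = J ∧ Set.InjOn ρ J ∧ Set.InjOn v (Set.range ρ \ J) := by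
  classical
  obtain _ | _ := isEmpty_or_nonempty ι
  · exact ⟨id, rfl, rfl, Set.injOn_id J, fun i ↦ isEmptyElim i⟩
  set ρ : ι → ι := fun i ↦ if i ∈ J then i else Function.invFunOn v Jᶜ (v i)
  have hρJ {i} (hi : i ∈ J) : ρ i = i := if_pos hi
  have hρ {i} (hi : i ∉ J) : ρ i = Function.invFunOn v Jᶜ (v i) := if_neg hi
  have hmem {i} (hi : i ∉ J) : ρ i ∈ Jᶜ := by
    rw [hρ hi]
    exact Function.invFunOn_mem ⟨i, hi, rfl⟩
  have hv (i) : v (ρ i) = v i := by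
    by_cases hi : i ∈ J
    · rw [hρJ hi]
    · rw [hρ hi, Function.invFunOn_eq (f := v) (s := Jᶜ) ⟨i, hi, rfl⟩]
  refine ⟨ρ, funext hv, Set.ext fun i ↦ ?_, fun i hi j hj h ↦ ?_, ?_⟩
  · exact ⟨not_imp_not.1 hmem, fun hi ↦ by rwa [Set.mem_preimage, hρJ hi]⟩
  · rwa [hρJ hi, hρJ hj] at h
  · rintro _ ⟨⟨i, rfl⟩, hi⟩ _ ⟨⟨j, rfl⟩, hj⟩ h
    rw [hv, hv] at h
    rw [hρ fun hiJ ↦ hi (by rwa [hρJ hiJ]), hρ fun hjJ ↦ hj (by rwa [hρJ hjJ]), h]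

lemma IsMinimalWeighting.eq_zero_of_forall_mem_eq_zero (hw : IsMinimalWeighting v J w)
    (hd : IsBalancedWeighting v J d) (hdJ : ∀ k ∈ J, d k = 0) (hdw : ∀ k, d k ≠ 0 → w k ≠ 0) :
    d = 0 := by
  have hev := eventually_add_smul_le hw.nonneg fun k hk ↦ (hw.nonneg k).lt_of_ne' (hdw k hk)
  obtain ⟨ε, hεw, hε⟩ := ((hev.filter_mono (nhdsWithin_le_nhds (s := Set.Ioi 0))).and
    self_mem_nhdsWithin).exists
  have hε : 0 < ε := hε
  rw [zero_add] at hεw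
  have hεd : IsBalancedWeighting v J (ε • d) := by
    refine ⟨smul_nonneg hε.le hd.nonneg, fun r ↦ ?_, fun k hk ↦ ⟨0, by simp [hdJ k hk]⟩⟩
    simp only [Pi.smul_apply, smul_eq_mul, mul_assoc, ← mul_sum, hd.balanced, mul_zero]
  obtain h | h := hw.minimal _ hεd hεw
  · exact (smul_eq_zero.1 h).resolve_left hε.ne'
  · obtain ⟨k, hk, hwk⟩ := hw.exists_ne
    exact absurd (by simp [← h, hdJ k hk]) hwk

/-- The case `a = b` says that `v a ≠ 0`. -/
lemma IsMinimalWeighting.ne_neg (hw : IsMinimalWeighting v J w) {a b : κ} (ha : a ∉ J)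
    (hb : b ∉ J) (hwa : w a ≠ 0) (hwb : w b ≠ 0) : v a ≠ -v b := by
  classical
  intro hab
  set d : κ → ℝ := Pi.single a 1 + Pi.single b 1 with hd
  have hsupp (k) (hk : d k ≠ 0) : k = a ∨ k = b := by
    contrapose! hk
    simp [hd, hk.1, hk.2]
  have hdJ (k) (hk : k ∈ J) : d k = 0 := by
    by_contra h
    obtain rfl | rfl := hsupp k h <;> contradiction
  have hsingle (k) : (0 : κ → ℝ) ≤ Pi.single k 1 := Pi.single_nonneg.2 zero_le_one
  have hd_balanced : IsBalancedWeighting v J d := by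
    refine ⟨add_nonneg (hsingle a) (hsingle b), fun r ↦ ?_, fun k hk ↦ ⟨0, by simp [hdJ k hk]⟩⟩
    simp [hd, add_mul, sum_add_distrib, Pi.single_apply, hab]
  have hd0 : d = 0 := hw.eq_zero_of_forall_mem_eq_zero hd_balanced hdJ fun k hk ↦ by
    obtain rfl | rfl := hsupp k hk <;> assumption
  have hda : 1 ≤ d a := by simpa [hd] using hsingle b a
  rw [hd0] at hda
  exact absurd hda (by simp)

lemma IsMinimalWeighting.sum_ne_zero (hw : IsMinimalWeighting v J w)
    {C : Finset (Σ k, Fin ⌊w k⌋₊)} (hC : C.Nonempty) (hCuniv : C ≠ univ) :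
    ∑ i ∈ C, v i.1 ≠ 0 := by
  classical
  intro hsum
  set d : (Σ k, Fin ⌊w k⌋₊) → ℝ := Set.indicator C 1
  have hd (f : (Σ k, Fin ⌊w k⌋₊) → ℝ) : ∑ i, d i * f i = ∑ i ∈ C, f i := by
    simp [d, Set.indicator_apply]
  have hd_balanced : IsBalancedWeighting (v ∘ Sigma.fst) (Sigma.fst ⁻¹' J) d := by
    refine ⟨Set.indicator_nonneg fun _ _ ↦ zero_le_one, fun r ↦ ?_, fun i _ ↦ ?_⟩
    · rw [hd]
      exact_mod_cast (Finset.sum_apply r C _).symm.trans (congrFun hsum r)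
    · exact ⟨Set.indicator C 1 i, by simp [d, Set.indicator_apply]⟩
  have hfloor (k) : FunOnFinite.map Sigma.fst d k ≤ ⌊w k⌋₊ := by
    rw [funOnFinite_map_sigmaFst_apply]
    refine (sum_le_card_nsmul _ _ 1 fun i _ ↦ ?_).trans_eq (by simp)
    exact Set.indicator_le_self' (fun _ _ ↦ zero_le_one) _
  have htotal : ∑ k, FunOnFinite.map Sigma.fst d k = #C := by
    rw [sum_funOnFinite_map]
    simpa using hd 1
  obtain h | h := hw.minimal _ hd_balanced.map
    fun k ↦ (hfloor k).trans (Nat.floor_le (hw.nonneg k))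
  · have hcard : (#C : ℝ) = 0 := by rw [← htotal, h]; simp
    exact hC.ne_empty (by simpa using hcard)
  · have hlt : (#C : ℝ) < ∑ k, (⌊w k⌋₊ : ℝ) := by
      have hcard := card_lt_card (ssubset_univ_iff.2 hCuniv)
      rw [card_univ, Fintype.card_sigma] at hcard
      simp only [Fintype.card_fin] at hcard
      exact_mod_cast hcard
    rw [← htotal, h] at hlt
    exact hlt.not_ge (sum_le_sum fun k _ ↦ Nat.floor_le (hw.nonneg k))

lemma sum_fract_le_card (w : κ → ℝ) : ∑ k, Int.fract (w k) ≤ #{k | Int.fract (w k) ≠ 0} := by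
  rw [← sum_filter_ne_zero]
  simpa using sum_le_card_nsmul {k | Int.fract (w k) ≠ 0} _ 1 fun k _ ↦ (Int.fract_lt_one (w k)).le

variable [Fintype R] {D H : ℕ}

lemma IsMinimalWeighting.two_mul_card_fract_add_one_le (hw : IsMinimalWeighting v J w)
    (hv : ∀ k, ‖v k‖ ≤ D) (hinj : Set.InjOn v (Function.support w \ J)) :
    2 * #{k | Int.fract (w k) ≠ 0} + 1 ≤ (2 * D + 1) ^ Fintype.card R := by
  classical
  set T : Finset κ := {k | Int.fract (w k) ≠ 0}
  have hT (k) (hk : k ∈ T) : k ∈ Function.support w \ J := by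
    have hk : Int.fract (w k) ≠ 0 := (mem_filter.1 hk).2
    refine ⟨fun h ↦ hk (by rw [h, Int.fract_zero]), fun hkJ ↦ ?_⟩
    obtain ⟨z, hz⟩ := hw.integral k hkJ
    exact hk (by rw [hz, Int.fract_intCast])
  rw [← card_image_of_injOn (hinj.mono hT)]
  refine two_mul_card_add_one_le ?_ ?_ <;> simp only [forall_mem_image]
  · exact fun k _ ↦ hv k
  · intro b hb hneg
    obtain ⟨a, ha, hab⟩ := mem_image.1 hneg
    exact hw.ne_neg (hT a ha).2 (hT b hb).2 (hT a ha).1 (hT b hb).1 hab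

lemma IsBalancedWeighting.norm_sum_floor_smul_le (hw : IsBalancedWeighting v J w)
    (hv : ∀ k, ‖v k‖ ≤ D) (hH : ∑ k, Int.fract (w k) ≤ H) :
    ‖∑ k, ⌊w k⌋₊ • v k‖ ≤ (D * H : ℕ) := by
  refine (pi_norm_le_iff_of_nonneg (Nat.cast_nonneg _)).2 fun r ↦ ?_
  have hcast : (((∑ k, ⌊w k⌋₊ • v k) r : ℤ) : ℝ) = -∑ k, Int.fract (w k) * v k r := by
    rw [← sub_eq_zero, sub_neg_eq_add, ← hw.balanced r, Finset.sum_apply, Int.cast_sum,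
      ← sum_add_distrib]
    refine sum_congr rfl fun k _ ↦ ?_
    rw [Pi.smul_apply, nsmul_eq_mul, Int.cast_mul, Int.cast_natCast, ← add_mul,
      natCast_floor_eq_intCast_floor (hw.nonneg k), Int.floor_add_fract]
  rw [← Int.norm_cast_real, hcast, norm_neg]
  calc ‖∑ k, Int.fract (w k) * (v k r : ℝ)‖ ≤ ∑ k, Int.fract (w k) * D := by
        refine norm_sum_le_of_le _ fun k _ ↦ ?_
        rw [norm_mul, Real.norm_of_nonneg (Int.fract_nonneg _), Int.norm_cast_real]
        exact mul_le_mul_of_nonneg_left ((norm_le_pi_norm _ r).trans (hv k)) (Int.fract_nonneg _)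
    _ ≤ (D * H : ℕ) := by
        rw [← sum_mul, Nat.cast_mul, mul_comm]
        gcongr

lemma IsMinimalWeighting.sum_floor_le (hw : IsMinimalWeighting v J w) (hv : ∀ k, ‖v k‖ ≤ D)
    (hH : ∑ k, Int.fract (w k) ≤ H) :
    ∑ k, ⌊w k⌋₊ ≤ (2 * (Fintype.card R * D + D * H) + 1) ^ Fintype.card R := by
  have hcard : Fintype.card (Σ k, Fin ⌊w k⌋₊) = ∑ k, ⌊w k⌋₊ := by
    rw [Fintype.card_sigma]
    simp only [Fintype.card_fin]
  rw [← hcard]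
  refine card_le_of_forall_sum_ne_zero (x := fun i : Σ k, Fin ⌊w k⌋₊ ↦ v i.1) (fun i ↦ hv i.1) ?_
    fun C hC hCuniv ↦ hw.sum_ne_zero hC hCuniv
  rw [Fintype.sum_sigma]
  simpa using hw.norm_sum_floor_smul_le hv hH

lemma IsMinimalWeighting.sum_le_of_injOn (hw : IsMinimalWeighting v J w) (hv : ∀ k, ‖v k‖ ≤ D)
    (hinj : Set.InjOn v (Function.support w \ J)) :
    ∑ k, w k ≤ (2 * D * (2 * Fintype.card R * D + 1) ^ Fintype.card R + 1) ^ Fintype.card R := by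
  set H := #{k | Int.fract (w k) ≠ 0}
  have hfract : ∑ k, Int.fract (w k) ≤ H := sum_fract_le_card w
  have hfloor := hw.sum_floor_le hv hfract
  have hpow := pow_add_le_pow (hw.two_mul_card_fract_add_one_le hv hinj)
  calc ∑ k, w k = (∑ k, ⌊w k⌋₊ : ℕ) + ∑ k, Int.fract (w k) := by
        rw [Nat.cast_sum, ← sum_add_distrib]
        refine sum_congr rfl fun k _ ↦ ?_
        rw [natCast_floor_eq_intCast_floor (hw.nonneg k), Int.floor_add_fract]
    _ ≤ (∑ k, ⌊w k⌋₊ : ℕ) + H := by gcongr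
    _ ≤ _ := by exact_mod_cast (Nat.add_le_add_right hfloor H).trans hpow

/-- The indices outside `J` with equal vectors are merged. -/
theorem IsMinimalWeighting.sum_le (hw : IsMinimalWeighting v J w) (hv : ∀ k, ‖v k‖ ≤ D) :
    ∑ k, w k ≤ (2 * D * (2 * Fintype.card R * D + 1) ^ Fintype.card R + 1) ^ Fintype.card R := by
  obtain ⟨ρ, hvρ, hJρ, hρ, hinj⟩ := exists_representative v J
  rw [← sum_funOnFinite_map ρ w]
  rw [← hvρ, ← hJρ] at hw
  refine (hw.map (hJρ.symm ▸ hρ)).sum_le_of_injOn hv (hinj.mono ?_)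
  exact Set.sdiff_subset_sdiff_left fun k ↦ mem_range_of_funOnFinite_map_ne_zero

end Weightings

section SignedColumns

variable {R C : Type*} {E : Matrix R C ℤ} {g : C → ℝ}

/-- The columns of `E` with the signs of `g`: the weighting `|g|` of these columns is balanced if
and only if `g` is in the kernel of `E`. -/
noncomputable def signedCol (E : Matrix R C ℤ) (g : C → ℝ) (j : C) : R → ℤ :=
  (SignType.sign (g j) : ℤ) • E.col j

lemma signedCol_apply (E : Matrix R C ℤ) (g : C → ℝ) (j : C) (r : R) :
    (signedCol E g j r : ℝ) = SignType.sign (g j) * E r j := by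
  simp [signedCol]

lemma norm_signedCol_le [Fintype R] {D : ℕ} {j : C} (hE : ∀ r, (E r j).natAbs ≤ D) (g : C → ℝ) :
    ‖signedCol E g j‖ ≤ D := by
  have hcol : ‖E.col j‖ ≤ D := (pi_norm_le_iff_of_nonneg D.cast_nonneg).2 fun r ↦ by
    rw [Matrix.col_apply, Int.norm_eq_abs, ← Int.cast_abs, Int.abs_eq_natAbs]
    exact_mod_cast hE r
  rw [signedCol]
  cases SignType.sign (g j) <;> simp [hcol]

lemma abs_sign_mul_of_le_abs {a b : ℝ} (hb : 0 ≤ b) (hba : b ≤ |a|) :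
    |SignType.sign a * b| = b := by
  obtain rfl | ha := eq_or_ne a 0
  · simpa using hb.antisymm (by simpa using hba)
  · obtain ha | ha := ha.lt_or_gt <;> simp [ha, hb]

lemma conformalTo_sign_mul {d : C → ℝ} (hd : 0 ≤ d) (hdg : d ≤ |g|) :
    ConformalTo (fun j ↦ SignType.sign (g j) * d j) g := by
  refine fun j ↦ ⟨?_, ?_⟩
  · rw [abs_mul, abs_of_nonneg (hd j)]
    refine (mul_le_of_le_one_left (hd j) ?_).trans (hdg j)
    cases SignType.sign (g j) <;> simp
  · rw [mul_right_comm, sign_mul_self]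
    exact mul_nonneg (abs_nonneg _) (hd j)

end SignedColumns

section ConformallyMinimal

variable {R C : Type*} [Fintype C] [DecidableEq C] {E : Matrix R C ℤ} {I : Finset C} {g : C → ℝ}

/-- The mixed Graver basis elements of type (i): the elements of the mixed kernel that are minimal
for the conformal order and whose integral part is nonzero. -/
structure IsConformallyMinimal (E : Matrix R C ℤ) (I : Finset C) (g : C → ℝ) : Prop where
  mem : MixedKer E I g
  exists_ne : ∃ i ∈ I, g i ≠ 0
  minimal : ∀ y, MixedKer E I y → y ≠ 0 → ConformalTo y g → y = g

lemma mixedKer_iff {x : C → ℝ} :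
    MixedKer E I x ↔ (∀ r, ∑ j, E r j * x j = 0) ∧ ∀ i ∈ I, ∃ z : ℤ, x i = z := by
  simp [MixedKer, funext_iff, mulVec, dotProduct]

lemma MixedKer.isBalancedWeighting_abs (hg : MixedKer E I g) :
    IsBalancedWeighting (signedCol E g) I |g| := by
  obtain ⟨hker, hint⟩ := mixedKer_iff.1 hg
  refine ⟨abs_nonneg g, fun r ↦ ?_, fun i hi ↦ ?_⟩
  · rw [← hker r]
    refine sum_congr rfl fun j _ ↦ ?_
    rw [Pi.abs_apply, signedCol_apply]
    linear_combination (E r j : ℝ) * sign_mul_abs (g j)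
  · obtain ⟨z, hz⟩ := hint i hi
    exact ⟨|z|, by simp [hz]⟩

lemma IsBalancedWeighting.mixedKer_sign_mul {d : C → ℝ}
    (hd : IsBalancedWeighting (signedCol E g) I d) :
    MixedKer E I fun j ↦ SignType.sign (g j) * d j := by
  refine mixedKer_iff.2 ⟨fun r ↦ ?_, fun i hi ↦ ?_⟩
  · rw [← hd.balanced r]
    refine sum_congr rfl fun j _ ↦ ?_
    rw [signedCol_apply]
    ring
  · obtain ⟨z, hz⟩ := hd.integral i hi
    exact ⟨SignType.sign (g i) * z, by simp [hz]⟩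

lemma IsConformallyMinimal.isMinimalWeighting_abs (hg : IsConformallyMinimal E I g) :
    IsMinimalWeighting (signedCol E g) I |g| := by
  obtain ⟨i, hi, hgi⟩ := hg.exists_ne
  refine ⟨hg.mem.isBalancedWeighting_abs, ⟨i, hi, by simpa using hgi⟩, fun d hd hdg ↦ ?_⟩
  have habs (j) : |SignType.sign (g j) * d j| = d j :=
    abs_sign_mul_of_le_abs (hd.nonneg j) (hdg j)
  obtain h | h := eq_or_ne (fun j ↦ SignType.sign (g j) * d j) 0
  · exact .inl (funext fun j ↦ by rw [← habs j, congrFun h j, Pi.zero_apply, abs_zero])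
  · have := hg.minimal _ hd.mixedKer_sign_mul h (conformalTo_sign_mul hd.nonneg hdg)
    exact .inr (funext fun j ↦ by rw [← habs j, congrFun this j, Pi.abs_apply])

theorem IsConformallyMinimal.vnorm1_le [Fintype R] (hg : IsConformallyMinimal E I g) {D : ℕ}
    (hE : ∀ r c, (E r c).natAbs ≤ D) :
    vnorm1 g ≤ (2 * D * (2 * Fintype.card R * D + 1) ^ Fintype.card R + 1) ^ Fintype.card R :=
  hg.isMinimalWeighting_abs.sum_le fun j ↦ norm_signedCol_le (hE · j) g

end ConformallyMinimal

section Circuits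

variable {R C : Type*} [Fintype C] {A : Matrix R C ℤ} {g : C → ℤ}

lemma exists_sum_mul_eq_one_of_gcd_natAbs_eq_one (hg : (univ.gcd fun i ↦ (g i).natAbs) = 1) :
    ∃ a : C → ℤ, ∑ i, g i * a i = 1 := by
  obtain ⟨a, ha⟩ := univ.gcd_eq_sum_mul g
  have hdvd : (univ.gcd g).natAbs ∣ 1 :=
    hg ▸ dvd_gcd fun i hi ↦ Int.natAbs_dvd_natAbs.2 (gcd_dvd hi)
  have hunit : IsUnit (univ.gcd g) := Int.isUnit_iff_natAbs_eq.2 (Nat.dvd_one.1 hdvd)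
  refine ⟨fun i ↦ a i * univ.gcd g, ?_⟩
  simp only [← mul_assoc, ← sum_mul, ← ha, Int.isUnit_mul_self hunit]

lemma IsCircuit.map_intCast_mulVec (hg : IsCircuit A g) :
    A.map (Int.cast : ℤ → ℝ) *ᵥ (fun i ↦ (g i : ℝ)) = 0 := by
  ext r
  simpa [mulVec, dotProduct] using congrArg (Int.cast : ℤ → ℝ) (congrFun hg.2.1 r)

lemma IsCircuit.exists_eq_smul (hg : IsCircuit A g) {y : C → ℝ}
    (hy : A.map (Int.cast : ℤ → ℝ) *ᵥ y = 0) (hyg : ∀ i, g i = 0 → y i = 0) :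
    ∃ c : ℝ, y = c • fun i ↦ (g i : ℝ) := by
  have hker := hg.map_intCast_mulVec
  obtain ⟨hg0, -, -, hmin⟩ := hg
  obtain ⟨i, hi⟩ := Function.ne_iff.1 hg0
  have hi : (g i : ℝ) ≠ 0 := Int.cast_ne_zero.2 hi
  refine ⟨y i / g i, sub_eq_zero.1 (not_not.1 fun hz ↦ hmin _ hz ?_ ?_)⟩
  · rw [mulVec_sub, mulVec_smul, hy, hker, smul_zero, sub_zero]
  · refine ssubset_of_subset_of_ne (Function.support_subset_iff'.2 fun j hgj ↦ ?_) fun h ↦ ?_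
    · have hgj : (g j : ℝ) = 0 := Function.notMem_support.1 hgj
      simp [hyg j (Int.cast_eq_zero.1 hgj), hgj]
    · refine h.symm.subset hi ?_
      simp [div_mul_cancel₀ _ hi]

lemma IsCircuit.exists_intCast_eq (hg : IsCircuit A g) {c : ℝ}
    (hc : ∀ i, ∃ z : ℤ, (c • fun i ↦ (g i : ℝ)) i = z) : ∃ z : ℤ, c = z := by
  obtain ⟨a, ha⟩ := exists_sum_mul_eq_one_of_gcd_natAbs_eq_one hg.2.2.1
  choose z hz using hc
  refine ⟨∑ i, z i * a i, ?_⟩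
  calc c = c * (∑ i, g i * a i : ℤ) := by rw [ha, Int.cast_one, mul_one]
    _ = (∑ i, z i * a i : ℤ) := by
      push_cast
      simp only [mul_sum, ← hz, Pi.smul_apply, smul_eq_mul, mul_assoc]

theorem IsCircuit.isConformallyMinimal [DecidableEq C] (hg : IsCircuit A g) :
    IsConformallyMinimal A univ fun i ↦ (g i : ℝ) := by
  obtain ⟨i, hi⟩ := Function.ne_iff.1 hg.1
  refine ⟨⟨hg.map_intCast_mulVec, fun i _ ↦ ⟨g i, rfl⟩⟩,
    ⟨i, mem_univ i, Int.cast_ne_zero.2 hi⟩, fun y hy hy0 hyg ↦ ?_⟩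
  obtain ⟨c, rfl⟩ := hg.exists_eq_smul hy.1 fun i hi ↦ by simpa [hi] using (hyg i).1
  obtain ⟨z, rfl⟩ := hg.exists_intCast_eq fun i ↦ hy.2 i (mem_univ i)
  have hz0 : z ≠ 0 := by
    rintro rfl
    simp at hy0
  obtain ⟨hle, hmul⟩ := hyg i
  simp only [Pi.smul_apply, smul_eq_mul, abs_mul, mul_assoc] at hle hmul
  norm_cast at hle hmul
  have hz_nonneg : 0 ≤ z := nonneg_of_mul_nonneg_left hmul (mul_self_pos.2 hi)
  have hz_le : |z| ≤ 1 := le_of_mul_le_mul_right (by simpa using hle) (abs_pos.2 hi)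
  have hz : z = 1 := by
    have := (le_abs_self z).trans hz_le
    lia
  rw [hz, Int.cast_one, one_smul]

end Circuits

section MixedGraver

variable {R C : Type*} [Fintype R] [Fintype C]

lemma natAbs_le_matNormInf (E : Matrix R C ℤ) (r : R) (c : C) :
    (E r c).natAbs ≤ matNormInf E :=
  le_sup (f := fun p : R × C ↦ (E p.1 p.2).natAbs) (mem_univ (r, c))

lemma vnorm1_eq_vnorm1_subtype {I : Finset C} {g : C → ℝ} [DecidableEq C]
    (hg : ∀ i ∈ I, g i = 0) : vnorm1 g = vnorm1 fun i : {i // i ∉ I} ↦ g i := by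
  rw [vnorm1, ← Fintype.sum_subtype_add_sum_subtype (· ∈ I)]
  simp [vnorm1, hg]

theorem mixedGraver_norm1_bound_general [DecidableEq C] (E : Matrix R C ℤ) (I : Finset C)
    (g : C → ℝ) (hg : InMixedGraver E I g) :
    vnorm1 g ≤ (2 * (matNormInf E : ℝ) *
      (2 * (Fintype.card R : ℝ) * (matNormInf E : ℝ) + 1) ^ Fintype.card R + 1) ^
        Fintype.card R := by
  obtain ⟨hker, hne, hmin⟩ | ⟨hI, gz, hgz, hcircuit⟩ := hg
  · have hg : IsConformallyMinimal E I g :=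
      ⟨hker, hne, fun y hy hy0 hyg ↦ not_not.1 fun hne ↦ hmin y hy hy0 hne hyg⟩
    exact hg.vnorm1_le (natAbs_le_matNormInf E)
  · rw [vnorm1_eq_vnorm1_subtype hI, funext hgz]
    exact hcircuit.isConformallyMinimal.vnorm1_le fun r c ↦ natAbs_le_matNormInf E r c

end MixedGraver

/-- every element of the mixed Graver basis satisfies
`‖g‖₁ ≤ (2‖E‖∞ (2m‖E‖∞ + 1)^m + 1)^m`. -/
theorem mixedGraver_norm1_bound (m N : ℕ) (E : Matrix (Fin m) (Fin N) ℤ)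
    (I : Finset (Fin N)) (g : Fin N → ℝ) (hg : InMixedGraver E I g) :
    vnorm1 g ≤
      (2 * (matNormInf E : ℝ) * (2 * (m : ℝ) * (matNormInf E : ℝ) + 1) ^ m + 1) ^ m := by
  simpa using mixedGraver_norm1_bound_general E I g hg
end

section
/- (MIP Proximity) Consider a mixed-integer program with integer m×N constraint matrix E, integral coordinates I ⊆ [N], and separable convex objective f. Let p ∈ [1, ∞], and let W ≥ 0 be such that every element of ker_X(E) admits a one-fat decomposition whose fat element h satisfies ‖h‖_p ≤ W. Suppose z* ∈ ℤ^N is an integral optimum of the program, and x* is a mixed optimum such that ‖z* − x*‖_p is minimal among all mixed optima. Then ‖z* − x*‖_p ≤ W. -/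
/-!
Split `x - z = h + g` with `h` fat of norm at most `W` and `g` integral. By conformality `z + h` and
`z + g` both lie in the box spanned by `z` and `x`, so the first is a feasible point of the mixed
program and the second of the integral one. Coordinatewise they are mirror images in the segment
from `z i` to `x i`, so separable convexity gives `f (z + h) + f (z + g) ≤ f z + f x`. As `z` is an
integral optimum, `f z ≤ f (z + g)`; hence `f (z + h) ≤ f x`, and `z + h` is a mixed optimum at
distance `‖h‖` from `z`.
-/

open Matrix BigOperators

lemma convexOn_add_map_add_sub_le {𝕜 V M : Type*} [Ring 𝕜] [PartialOrder 𝕜] [AddCommGroup V]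
    [Module 𝕜 V] [AddCommMonoid M] [PartialOrder M] [IsOrderedAddMonoid M] [Module 𝕜 M] {s : Set V}
    {f : V → M} (hf : ConvexOn 𝕜 s f) {a b c : V} (ha : a ∈ s) (hb : b ∈ s)
    (hc : c ∈ segment 𝕜 a b) : f c + f (a + b - c) ≤ f a + f b := by
  obtain ⟨α, β, hα, hβ, hαβ, rfl⟩ := hc
  have mirror : a + b - (α • a + β • b) = β • a + α • b := by
    rw [sub_eq_iff_eq_add, add_add_add_comm, ← add_smul, ← add_smul, hαβ, add_comm β, hαβ,
      one_smul, one_smul]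
  calc f (α • a + β • b) + f (a + b - (α • a + β • b))
      ≤ (α • f a + β • f b) + (β • f a + α • f b) := by
        rw [mirror]
        exact add_le_add (hf.2 ha hb hα hβ hαβ) (hf.2 ha hb hβ hα (by rwa [add_comm]))
    _ = f a + f b := by
        rw [add_add_add_comm, ← add_smul, ← add_smul, add_comm β, hαβ, one_smul, one_smul]

lemma ConformalTo.add_mem_uIcc {ι : Type*} {d x z : ι → ℝ} (hd : ConformalTo d (x - z)) :
    z + d ∈ Set.uIcc z x := by
  rw [← Set.pi_univ_uIcc]
  intro i _
  obtain ⟨habs, hsign⟩ := hd i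
  simp only [Pi.sub_apply, Pi.add_apply] at habs hsign ⊢
  rw [Set.mem_uIcc]
  rcases le_total (z i) (x i) with hzx | hxz
  · rw [abs_of_nonneg (sub_nonneg.2 hzx), abs_le] at habs
    left
    constructor <;> nlinarith
  · rw [abs_of_nonpos (sub_nonpos.2 hxz), abs_le] at habs
    right
    constructor <;> nlinarith

lemma sum_convexOn_add_le_of_conformalTo {ι : Type*} [Fintype ι] {f : ι → ℝ → ℝ} {l u : ι → ℝ}
    (hf : ∀ i, ConvexOn ℝ (Set.Icc (l i) (u i)) (f i)) {x z h g : ι → ℝ}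
    (hz : z ∈ Set.Icc l u) (hx : x ∈ Set.Icc l u) (hsum : x - z = h + g)
    (hh : ConformalTo h (x - z)) :
    ∑ i, f i ((z + h) i) + ∑ i, f i ((z + g) i) ≤ ∑ i, f i (z i) + ∑ i, f i (x i) := by
  simp only [← Finset.sum_add_distrib]
  refine Finset.sum_le_sum fun i _ ↦ ?_
  have hseg : (z + h) i ∈ segment ℝ (z i) (x i) := by
    rw [segment_eq_uIcc]
    exact ⟨hh.add_mem_uIcc.1 i, hh.add_mem_uIcc.2 i⟩
  have mirror : (z + g) i = z i + x i - (z + h) i := by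
    have := congrFun hsum i
    simp only [Pi.sub_apply, Pi.add_apply] at this ⊢
    linear_combination -this
  rw [mirror]
  exact convexOn_add_map_add_sub_le (hf i) ⟨hz.1 i, hz.2 i⟩ ⟨hx.1 i, hx.2 i⟩ hseg

section MixedIntegerProgram

variable {R C : Type*} [Fintype C] {E : Matrix R C ℤ} {I J : Finset C} {b : R → ℝ} {l u : C → ℝ}
  {f : C → ℝ → ℝ} {x z h g : C → ℝ}

/-- The feasible points of the mixed-integer program `E x = b`, `l ≤ x ≤ u` with integral
coordinates `I`. Those of its integral restriction are obtained by taking `I = Finset.univ`. -/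
def mipFeasible (E : Matrix R C ℤ) (I : Finset C) (b : R → ℝ) (l u : C → ℝ) : Set (C → ℝ) :=
  {y | (E.map (Int.cast : ℤ → ℝ)).mulVec y = b ∧ l ≤ y ∧ y ≤ u ∧ ∀ i ∈ I, ∃ w : ℤ, y i = w}

/-- `x` minimizes the separable objective `∑ i, f i (x i)` over the mixed-integer program:
a mixed optimum for the given `I`, an integral optimum for `I = Finset.univ`. -/
def IsMIPOptimum (E : Matrix R C ℤ) (I : Finset C) (b : R → ℝ) (l u : C → ℝ) (f : C → ℝ → ℝ)
    (x : C → ℝ) : Prop :=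
  x ∈ mipFeasible E I b l u ∧ IsMinOn (fun y ↦ ∑ i, f i (y i)) (mipFeasible E I b l u) x

lemma mem_Icc_of_mem_mipFeasible (hx : x ∈ mipFeasible E I b l u) : x ∈ Set.Icc l u :=
  ⟨hx.2.1, hx.2.2.1⟩

lemma mipFeasible_anti (hIJ : I ⊆ J) : mipFeasible E J b l u ⊆ mipFeasible E I b l u :=
  fun _ ⟨heq, hl, hu, hint⟩ ↦ ⟨heq, hl, hu, fun i hi ↦ hint i (hIJ hi)⟩

lemma isMIPOptimum_univ_intCast {z : C → ℤ}
    (hz : (fun i ↦ (z i : ℝ)) ∈ mipFeasible E I b l u)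
    (hmin : ∀ y : C → ℤ, (fun i ↦ (y i : ℝ)) ∈ mipFeasible E I b l u →
      ∑ i, f i (z i) ≤ ∑ i, f i (y i)) :
    IsMIPOptimum E Finset.univ b l u f fun i ↦ (z i : ℝ) := by
  refine ⟨⟨hz.1, hz.2.1, hz.2.2.1, fun i _ ↦ ⟨z i, rfl⟩⟩, fun y hy ↦ ?_⟩
  choose w hw using fun i ↦ hy.2.2.2 i (Finset.mem_univ i)
  obtain rfl : y = fun i ↦ (w i : ℝ) := funext hw
  exact hmin w (mipFeasible_anti (Finset.subset_univ I) hy)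

variable [DecidableEq C]

lemma mixedKer_sub (hx : x ∈ mipFeasible E I b l u) (hz : z ∈ mipFeasible E I b l u) :
    MixedKer E I (x - z) := by
  refine ⟨by rw [Matrix.mulVec_sub, hx.1, hz.1, sub_self], fun i hi ↦ ?_⟩
  obtain ⟨v, hv⟩ := hx.2.2.2 i hi
  obtain ⟨w, hw⟩ := hz.2.2.2 i hi
  exact ⟨v - w, by simp [hv, hw]⟩

lemma add_mem_mipFeasible (hz : z ∈ mipFeasible E I b l u) (hx : x ∈ Set.Icc l u)
    (hker : MixedKer E I h) (hconf : ConformalTo h (x - z)) :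
    z + h ∈ mipFeasible E I b l u := by
  obtain ⟨hl, hu⟩ := Set.uIcc_subset_Icc (mem_Icc_of_mem_mipFeasible hz) hx hconf.add_mem_uIcc
  refine ⟨by rw [Matrix.mulVec_add, hz.1, hker.1, add_zero], hl, hu, fun i hi ↦ ?_⟩
  obtain ⟨v, hv⟩ := hz.2.2.2 i hi
  obtain ⟨w, hw⟩ := hker.2 i hi
  exact ⟨v + w, by simp [hv, hw]⟩

lemma OneFatDecomp.isMIPOptimum_add_fat (hd : OneFatDecomp E I (x - z) h g)
    (hf : ∀ i, ConvexOn ℝ (Set.Icc (l i) (u i)) (f i))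
    (hz : IsMIPOptimum E Finset.univ b l u f z) (hx : IsMIPOptimum E I b l u f x) :
    IsMIPOptimum E I b l u f (z + h) := by
  obtain ⟨hsum, hh, hg, hh_ker, hg_ker, hg_int⟩ := hd
  have hz_box := mem_Icc_of_mem_mipFeasible hz.1
  have hx_box := mem_Icc_of_mem_mipFeasible hx.1
  have integral_feasible : z + g ∈ mipFeasible E Finset.univ b l u :=
    add_mem_mipFeasible hz.1 hx_box ⟨hg_ker, fun i _ ↦ hg_int i⟩ hg
  refine ⟨add_mem_mipFeasible (mipFeasible_anti (Finset.subset_univ I) hz.1) hx_box hh_ker hh,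
    fun y hy ↦ ?_⟩
  have exchange := sum_convexOn_add_le_of_conformalTo hf hz_box hx_box hsum hh
  have z_le : ∑ i, f i (z i) ≤ ∑ i, f i ((z + g) i) := hz.2 integral_feasible
  have x_le : ∑ i, f i (x i) ≤ ∑ i, f i (y i) := hx.2 hy
  change ∑ i, f i ((z + h) i) ≤ ∑ i, f i (y i)
  linarith

theorem mip_proximity_general (hf : ∀ i, ConvexOn ℝ (Set.Icc (l i) (u i)) (f i))
    {ν : (C → ℝ) → ℝ} (hν : ν.Even) {W : ℝ}
    (hW : ∀ v, MixedKer E I v → ∃ h g, OneFatDecomp E I v h g ∧ ν h ≤ W)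
    (hz : IsMIPOptimum E Finset.univ b l u f z) (hx : IsMIPOptimum E I b l u f x)
    (hnearest : ∀ y, IsMIPOptimum E I b l u f y → ν (z - x) ≤ ν (z - y)) :
    ν (z - x) ≤ W := by
  obtain ⟨h, g, hd, hh⟩ :=
    hW (x - z) (mixedKer_sub hx.1 (mipFeasible_anti (Finset.subset_univ I) hz.1))
  calc ν (z - x) ≤ ν (z - (z + h)) := hnearest _ (hd.isMIPOptimum_add_fat hf hz hx)
    _ = ν h := by rw [sub_add_cancel_left, hν]
    _ ≤ W := hh

end MixedIntegerProgram

/-- MIP Proximity: if every mixed-kernel element has a one-fat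
decomposition with fat element of `ℓ_p`-norm at most `W`, then an integral optimum `z`
and a nearest (in `ℓ_p`-norm) mixed optimum `x` satisfy `‖z - x‖_p ≤ W`. -/
theorem mip_proximity (m N : ℕ) (E : Matrix (Fin m) (Fin N) ℤ) (I : Finset (Fin N))
    (f : Fin N → ℝ → ℝ) (hf : ∀ i, ConvexOn ℝ Set.univ (f i))
    (b : Fin m → ℝ) (l u : Fin N → ℝ)
    (p : ENNReal) [Fact (1 ≤ p)] (W : ℝ) (hW : 0 ≤ W)
    (hWdecomp : ∀ v : Fin N → ℝ, MixedKer E I v →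
      ∃ h g : Fin N → ℝ, OneFatDecomp E I v h g ∧
        ‖(WithLp.equiv p (Fin N → ℝ)).symm h‖ ≤ W)
    (Feas : (Fin N → ℝ) → Prop)
    (hFeas : Feas = fun y => (E.map (Int.cast : ℤ → ℝ)).mulVec y = b ∧
      l ≤ y ∧ y ≤ u ∧ ∀ i ∈ I, ∃ w : ℤ, y i = w)
    (z : Fin N → ℤ) (hzfeas : Feas fun i => (z i : ℝ))
    (hzopt : ∀ y : Fin N → ℤ, (Feas fun i => (y i : ℝ)) →
      ∑ i, f i (z i) ≤ ∑ i, f i (y i))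
    (x : Fin N → ℝ) (hxfeas : Feas x)
    (hxopt : ∀ y, Feas y → ∑ i, f i (x i) ≤ ∑ i, f i (y i))
    (hxnearest : ∀ y, Feas y → (∀ y', Feas y' → ∑ i, f i (y i) ≤ ∑ i, f i (y' i)) →
      ‖(WithLp.equiv p (Fin N → ℝ)).symm ((fun i => (z i : ℝ)) - x)‖ ≤
        ‖(WithLp.equiv p (Fin N → ℝ)).symm ((fun i => (z i : ℝ)) - y)‖) :
    ‖(WithLp.equiv p (Fin N → ℝ)).symm ((fun i => (z i : ℝ)) - x)‖ ≤ W := by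
  subst hFeas
  exact mip_proximity_general (ν := fun v ↦ ‖(WithLp.equiv p (Fin N → ℝ)).symm v‖)
    (fun i ↦ (hf i).subset (Set.subset_univ _) (convex_Icc _ _))
    (fun v ↦ norm_neg (WithLp.toLp p v)) hWdecomp
    (isMIPOptimum_univ_intCast hzfeas hzopt) ⟨hxfeas, hxopt⟩ fun y hy ↦ hxnearest y hy.1 hy.2
end

section
/- Let f(x) = Σ_{i=1}^N f_i(x_i) where each f_i : ℝ → ℝ is convex, and let x, y₁, y₂ ∈ ℝ^N be such that y₁ and y₂ lie in the same orthant, i.e., (y₁)_i · (y₂)_i ≥ 0 for every i ∈ [N]. Then f(x + y₁ + y₂) − f(x + y₁) ≥ f(x + y₂) − f(x). -/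
open BigOperators

/-!
A point of a segment and its reflection in the midpoint are `a • x + b • y` and `b • x + a • y`
with `a + b = 1`; adding the two convexity inequalities, the weights cancel and
`g p + g q ≤ g x + g y` for such a pair `p`, `q`. In each coordinate, increments `a` and `b` of the
same sign make `x + a` and `x + b` such a pair in the segment from `x` to `x + a + b`.
-/

theorem smul_add_smul_add_swap {R M : Type*} [Semiring R] [AddCommMonoid M] [Module R M]
    {a b : R} (hab : a + b = 1) (u v : M) :
    (a • u + b • v) + (b • u + a • v) = u + v := by
  rw [add_add_add_comm, ← add_smul, ← add_smul, add_comm b a, hab, one_smul, one_smul]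

section Segment

variable {𝕜 E β : Type*} [Semiring 𝕜] [PartialOrder 𝕜] [AddCancelCommMonoid E] [Module 𝕜 E]
  [AddCommMonoid β] [PartialOrder β] [IsOrderedAddMonoid β] [Module 𝕜 β]

theorem convexOn_add_le_add_of_mem_segment {s : Set E} {g : E → β} (hg : ConvexOn 𝕜 s g)
    {x y p q : E} (hx : x ∈ s) (hy : y ∈ s) (hp : p ∈ segment 𝕜 x y) (hpq : p + q = x + y) :
    g p + g q ≤ g x + g y := by
  obtain ⟨a, b, ha, hb, hab, rfl⟩ := hp
  have hba : b + a = 1 := by rw [add_comm, hab]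
  obtain rfl : q = b • x + a • y :=
    add_left_cancel (hpq.trans (smul_add_smul_add_swap hab x y).symm)
  calc
    g (a • x + b • y) + g (b • x + a • y)
        ≤ (a • g x + b • g y) + (b • g x + a • g y) :=
      add_le_add (hg.2 hx hy ha hb hab) (hg.2 hx hy hb ha hba)
    _ = g x + g y := smul_add_smul_add_swap hab (g x) (g y)

end Segment

theorem add_mem_uIcc_of_mul_nonneg {R : Type*} [Ring R] [LinearOrder R] [IsStrictOrderedRing R]
    (x : R) {a b : R} (hab : 0 ≤ a * b) : x + a ∈ Set.uIcc x (x + a + b) := by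
  rw [Set.mem_uIcc]
  rcases mul_nonneg_iff.mp hab with ⟨ha, hb⟩ | ⟨ha, hb⟩
  · exact .inl ⟨le_add_of_nonneg_right ha, le_add_of_nonneg_right hb⟩
  · exact .inr ⟨add_le_of_nonpos_right hb, add_le_of_nonpos_right ha⟩

section Separable

variable {𝕜 β : Type*} [Field 𝕜] [LinearOrder 𝕜] [IsStrictOrderedRing 𝕜]
  [AddCommGroup β] [PartialOrder β] [IsOrderedAddMonoid β] [Module 𝕜 β]

theorem convexOn_sub_le_sub_of_mul_nonneg {s : Set 𝕜} {g : 𝕜 → β} (hg : ConvexOn 𝕜 s g)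
    {x a b : 𝕜} (hx : x ∈ s) (hxab : x + a + b ∈ s) (hab : 0 ≤ a * b) :
    g (x + b) - g x ≤ g (x + a + b) - g (x + a) := by
  have hseg : x + a ∈ segment 𝕜 x (x + a + b) := by
    rw [segment_eq_uIcc]
    exact add_mem_uIcc_of_mul_nonneg x hab
  have hsum : g (x + a) + g (x + b) ≤ g x + g (x + a + b) :=
    convexOn_add_le_add_of_mem_segment hg hx hxab hseg (by ring)
  rwa [sub_le_sub_iff, add_comm (g (x + b)), add_comm (g (x + a + b))]

theorem sepConvex_superadditive_general {ι : Type*} (t : Finset ι) {s : ι → Set 𝕜}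
    {f : ι → 𝕜 → β} (hf : ∀ i ∈ t, ConvexOn 𝕜 (s i) (f i)) {x y₁ y₂ : ι → 𝕜}
    (hx : ∀ i ∈ t, x i ∈ s i) (hxy : ∀ i ∈ t, x i + y₁ i + y₂ i ∈ s i)
    (horthant : ∀ i ∈ t, 0 ≤ y₁ i * y₂ i) :
    (∑ i ∈ t, f i (x i + y₂ i)) - (∑ i ∈ t, f i (x i)) ≤
      (∑ i ∈ t, f i (x i + y₁ i + y₂ i)) - (∑ i ∈ t, f i (x i + y₁ i)) := by
  rw [← Finset.sum_sub_distrib, ← Finset.sum_sub_distrib]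
  exact Finset.sum_le_sum fun i hi =>
    convexOn_sub_le_sub_of_mul_nonneg (hf i hi) (hx i hi) (hxy i hi) (horthant i hi)

end Separable

/-- superadditivity of separable convex functions along two vectors
from the same orthant. -/
theorem sepConvex_superadditive (N : ℕ) (f : Fin N → ℝ → ℝ)
    (hf : ∀ i, ConvexOn ℝ Set.univ (f i))
    (x y₁ y₂ : Fin N → ℝ) (horthant : ∀ i, 0 ≤ y₁ i * y₂ i) :
    (∑ i, f i (x i + y₂ i)) - (∑ i, f i (x i)) ≤
      (∑ i, f i (x i + y₁ i + y₂ i)) - (∑ i, f i (x i + y₁ i)) :=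
  sepConvex_superadditive_general Finset.univ (fun i _ => hf i)
    (fun _ _ => Set.mem_univ _) (fun _ _ => Set.mem_univ _) (fun i _ => horthant i)
end

section
/- There exists a function h : ℕ⁴ → ℕ such that the following holds. Let E be a 2-stage stochastic matrix with n blocks and block dimensions r, s, t, and let I be any subset of its columns designated integral. Then every element g of the mixed Graver basis G_X(E) satisfies ‖g‖∞ ≤ h(r, s, t, ‖E‖∞), i.e., the maximum ∞-norm of a mixed Graver basis element is bounded by a function of the block dimensions and ‖E‖∞ alone, independently of the number n of blocks. -/
/-!
Suppose that a mixed Graver basis element `g` has a huge coordinate. Replace the local part of every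
block, except the one holding that coordinate, by a basic solution of the block with the same global
part; it can be chosen conformal to a bounded multiple of `g`. A basic solution is determined by its
support, so only boundedly many different blocks remain, and identifying equal ones gives a kernel
vector, still with a huge coordinate, of a matrix from a finite list that does not depend on the
number of blocks. For a fixed matrix, a kernel vector with a huge coordinate admits a nonzero
bounded integral kernel vector of which even a prescribed multiple is conformal to it. Expanding
back, this becomes a nonzero bounded integral kernel vector of the 2-stage matrix conformal to `g`.
The only one that a mixed Graver basis element can admit is `g` itself, which is too large.
-/

open Matrix BigOperators

open Function

/-! ### Conformality -/

namespace ConformalTo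

variable {ι : Type*} {x y z : ι → ℝ}

theorem eq_zero (h : ConformalTo x y) {i : ι} (hi : y i = 0) : x i = 0 := by
  simpa [hi] using (h i).1

theorem trans (hxy : ConformalTo x y) (hyz : ConformalTo y z) : ConformalTo x z := by
  refine fun i => ⟨(hxy i).1.trans (hyz i).1, ?_⟩
  by_cases hi : y i = 0
  · simp [hxy.eq_zero hi]
  · refine nonneg_of_mul_nonneg_left (b := y i * y i) ?_ (mul_self_pos.mpr hi)
    linarith [mul_nonneg (hxy i).2 (hyz i).2]

theorem smul (h : ConformalTo x y) (a : ℝ) : ConformalTo (a • x) (a • y) := by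
  refine fun i => ⟨?_, ?_⟩
  · simpa only [Pi.smul_apply, smul_eq_mul, abs_mul] using
      mul_le_mul_of_nonneg_left (h i).1 (abs_nonneg a)
  · simpa only [Pi.smul_apply, smul_eq_mul, mul_mul_mul_comm] using
      mul_nonneg (mul_self_nonneg a) (h i).2

theorem of_smul {a : ℝ} (ha : a ≠ 0) (h : ConformalTo (a • x) (a • y)) : ConformalTo x y := by
  simpa only [inv_smul_smul₀ ha] using h.smul a⁻¹

theorem smul_self_of_le {a b : ℝ} (ha : 0 ≤ a) (hab : a ≤ b) (x : ι → ℝ) :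
    ConformalTo (a • x) (b • x) := by
  refine fun i => ⟨?_, ?_⟩
  · simp only [Pi.smul_apply, smul_eq_mul, abs_mul]
    gcongr
  · simpa only [Pi.smul_apply, smul_eq_mul, mul_mul_mul_comm] using
      mul_nonneg (mul_nonneg ha (ha.trans hab)) (mul_self_nonneg (x i))

theorem self_smul {a : ℝ} (ha : 1 ≤ a) (x : ι → ℝ) : ConformalTo x (a • x) := by
  simpa only [one_smul] using smul_self_of_le zero_le_one ha x

end ConformalTo

/-! ### Basic solutions -/

section BasicSolution

variable {C V : Type*} [AddCommGroup V] [Module ℝ V] {f : (C → ℝ) →ₗ[ℝ] V} {y z : C → ℝ}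

/-- A basic solution in the sense of linear programming: the columns of `f` indexed by the support
of `y` are linearly independent. The right-hand side of the system is `f y`. -/
def IsBasicSolution (f : (C → ℝ) →ₗ[ℝ] V) (y : C → ℝ) : Prop :=
  ∀ z, f z = 0 → (∀ c, y c = 0 → z c = 0) → z = 0

theorem IsBasicSolution.eq_of_map_eq (hy : IsBasicSolution f y) (hf : f z = f y)
    (hsupp : ∀ c, y c = 0 → z c = 0) : z = y :=
  sub_eq_zero.mp <| hy (z - y) (by rw [map_sub, hf, sub_self]) fun c hc => by simp [hc, hsupp c hc]

-- Cancelling a coordinate where `|z i / y i|` is maximal at most doubles every other coordinate.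
theorem exists_sub_smul_support_ssubset [Finite C] (hz : z ≠ 0) (hzy : ∀ c, y c = 0 → z c = 0) :
    ∃ a : ℝ, ConformalTo (y - a • z) ((2 : ℝ) • y) ∧ support (y - a • z) ⊂ support y := by
  obtain ⟨i₀, hi₀⟩ := Function.ne_iff.mp hz
  have : Nonempty C := ⟨i₀⟩
  obtain ⟨i, hmax⟩ := Finite.exists_max fun c => |z c / y c|
  have hratio : z i / y i ≠ 0 :=
    abs_pos.mp <| (abs_pos.mpr (div_ne_zero hi₀ (mt (hzy i₀) hi₀))).trans_le (hmax i₀)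
  obtain ⟨hzi, hyi⟩ := div_ne_zero_iff.mp hratio
  have hle : ∀ c, |y i / z i * z c| ≤ |y c| := by
    intro c
    by_cases hc : y c = 0
    · simp [hzy c hc]
    · calc |y i / z i * z c| = |z c / y c| / |z i / y i| * |y c| := by
            rw [← abs_div, ← abs_mul]
            congr 1
            field_simp
        _ ≤ |y c| := mul_le_of_le_one_left (abs_nonneg _) <|
            div_le_one_of_le₀ (hmax c) (abs_nonneg _)
  refine ⟨y i / z i, fun c => ?_, (Set.ssubset_iff_of_subset ?_).mpr ⟨i, hyi, by simp [hzi]⟩⟩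
  · simp only [Pi.sub_apply, Pi.smul_apply, smul_eq_mul]
    constructor
    · rw [abs_mul, abs_two]
      linarith [abs_sub (y c) (y i / z i * z c), hle c]
    · have : y i / z i * z c * y c ≤ y c * y c := by
        rw [← abs_mul_abs_self (y c)]
        exact (le_abs_self _).trans <| (abs_mul _ _).trans_le <|
          mul_le_mul_of_nonneg_right (hle c) (abs_nonneg _)
      linarith
  · exact fun c hc hyc => hc (by simp [hyc, hzy c hyc])

theorem exists_isBasicSolution [Finite C] (f : (C → ℝ) →ₗ[ℝ] V) (y : C → ℝ) :
    ∃ y', f y' = f y ∧ ConformalTo y' ((2 : ℝ) ^ Nat.card C • y) ∧ IsBasicSolution f y' := by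
  suffices H : ∀ (m : ℕ) (y : C → ℝ), (support y).ncard ≤ m →
      ∃ y', f y' = f y ∧ ConformalTo y' ((2 : ℝ) ^ m • y) ∧ IsBasicSolution f y' from
    H _ y (Set.ncard_le_card _)
  intro m
  induction m with
  | zero =>
    intro y hy
    obtain rfl : y = 0 := by simpa [Set.ncard_eq_zero (Set.toFinite _)] using hy
    refine ⟨0, rfl, fun c => by simp, fun z _ hz => funext fun c => hz c rfl⟩
  | succ m ih =>
    intro y hy
    by_cases hbasic : IsBasicSolution f y
    · exact ⟨y, rfl, .self_smul (one_le_pow₀ one_le_two) y, hbasic⟩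
    simp only [IsBasicSolution, not_forall] at hbasic
    obtain ⟨z, hfz, hzy, hz⟩ := hbasic
    obtain ⟨a, hconf, hsupp⟩ := exists_sub_smul_support_ssubset hz hzy
    have hcard := Set.ncard_lt_ncard hsupp
    obtain ⟨y', hfy', hconf', hbasic'⟩ := ih (y - a • z) (by omega)
    refine ⟨y', by simp [hfy', hfz], hconf'.trans ?_, hbasic'⟩
    rw [pow_succ, mul_smul]
    exact hconf.smul _

end BasicSolution

/-! ### Integral kernel vectors -/

section IntegralKernel

variable {R C : Type*} [Fintype C]

theorem map_intCast_mulVec_eq_zero_iff {M : Matrix R C ℤ} {v : C → ℤ} :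
    M.map (Int.cast : ℤ → ℝ) *ᵥ (fun c => (v c : ℝ)) = 0 ↔ M *ᵥ v = 0 := by
  simp only [funext_iff, mulVec, dotProduct, map_apply, Pi.zero_apply]
  norm_cast

theorem exists_int_mulVec_eq_zero {M : Matrix R C ℤ} {y : C → ℝ}
    (hy : M.map (Int.cast : ℤ → ℝ) *ᵥ y = 0) {j : C} (hj : y j ≠ 0) :
    ∃ v : C → ℤ, M *ᵥ v = 0 ∧ v j ≠ 0 ∧ ∀ c, y c = 0 → v c = 0 := by
  -- A `ℚ`-linear retraction of `ℝ` onto `ℚ` turns real kernel vectors into rational ones.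
  obtain ⟨φ, hφ⟩ := LinearMap.exists_leftInverse_of_injective (Algebra.linearMap ℚ ℝ)
    (LinearMap.ker_eq_bot.mpr (algebraMap ℚ ℝ).injective)
  have hφ₁ : φ 1 = 1 := by simpa using LinearMap.congr_fun hφ 1
  set q : C → ℚ := fun c => φ (y c / y j) with hq
  have hqker : ∀ p, ∑ c, (M p c : ℚ) * q c = 0 := fun p => by
    have hsum : ∑ c, M p c • (y c / y j) = 0 := by
      simpa [mulVec, dotProduct, Finset.sum_div, mul_div_assoc] using
        congrArg (· / y j) (congrFun hy p)
    have hφsum := congrArg φ hsum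
    simp only [map_sum, map_zero, map_zsmul] at hφsum
    simpa only [hq, zsmul_eq_mul] using hφsum
  obtain ⟨b, hb⟩ := IsLocalization.exist_integer_multiples_of_finite (nonZeroDivisors ℤ) q
  choose v hv using hb
  have hv' : ∀ c, (v c : ℚ) = b * q c := fun c => by
    simpa [Submonoid.smul_def] using hv c
  refine ⟨v, funext fun p => ?_, fun hvj => ?_, fun c hc => ?_⟩
  · have : ((∑ c, M p c * v c : ℤ) : ℚ) = 0 := by
      push_cast
      simp_rw [hv', mul_left_comm _ ((b : ℤ) : ℚ)]
      rw [← Finset.mul_sum, hqker, mul_zero]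
    exact_mod_cast this
  · have := hv' j
    simp only [hvj, hq, div_self hj, hφ₁, mul_one, Int.cast_zero] at this
    exact nonZeroDivisors.coe_ne_zero b (by exact_mod_cast this.symm)
  · have := hv' c
    simpa [hq, hc] using this

-- Only the support of `y`, the index `j` and the sign of `y j` matter: finitely many `v` suffice.
theorem exists_bounded_int_mulVec_eq_zero (M : Matrix R C ℤ) :
    ∃ N : ℕ, ∀ y : C → ℝ, M.map (Int.cast : ℤ → ℝ) *ᵥ y = 0 → ∀ j, y j ≠ 0 →
      ∃ v : C → ℤ, M *ᵥ v = 0 ∧ 0 < v j * y j ∧ (∀ c, y c = 0 → v c = 0) ∧ ∀ c, |v c| ≤ N := by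
  have hpattern : ∀ p : Set C × C, ∃ v : C → ℤ, ∀ y : C → ℝ,
      M.map (Int.cast : ℤ → ℝ) *ᵥ y = 0 → y p.2 ≠ 0 → support y = p.1 →
      M *ᵥ v = 0 ∧ v p.2 ≠ 0 ∧ ∀ c, y c = 0 → v c = 0 := by
    rintro ⟨β, j⟩
    by_cases hex : ∃ y : C → ℝ, M.map (Int.cast : ℤ → ℝ) *ᵥ y = 0 ∧ y j ≠ 0 ∧ support y = β
    · obtain ⟨y₀, hker₀, hj₀, rfl⟩ := hex
      obtain ⟨v, hv, hvj, hvsupp⟩ := exists_int_mulVec_eq_zero hker₀ hj₀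
      refine ⟨v, fun y _ _ hy => ⟨hv, hvj, fun c hc => hvsupp c ?_⟩⟩
      exact notMem_support.mp (mt (fun h => hy.symm.subset h) (notMem_support.mpr hc))
    · exact ⟨0, fun y hker hj hy => (hex ⟨y, hker, hj, hy⟩).elim⟩
  choose v hv using hpattern
  obtain ⟨N, hN⟩ := Finite.exists_le fun a : (Set C × C) × C => (v a.1 a.2).natAbs
  refine ⟨N, fun y hker j hj => ?_⟩
  obtain ⟨hvker, hvj, hvsupp⟩ := hv (support y, j) y hker hj rfl
  have hbound : ∀ c, |v (support y, j) c| ≤ N := fun c => by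
    rw [Int.abs_eq_natAbs]
    exact_mod_cast hN ((support y, j), c)
  rcases (mul_ne_zero (Int.cast_ne_zero.mpr hvj) hj).lt_or_gt with hneg | hpos
  · exact ⟨-v (support y, j), by rw [mulVec_neg, hvker, neg_zero], by simpa using hneg,
      fun c hc => by simp [hvsupp c hc], fun c => by simpa using hbound c⟩
  · exact ⟨v (support y, j), hvker, hpos, hvsupp, hbound⟩

/- A basic solution of `M y = 0`, `y j = w j` spans the kernel vectors of `M` supported on its
support, so it is a multiple of one of finitely many integral vectors. -/
theorem exists_int_conformalTo_of_lt_abs (M : Matrix R C ℤ) (K : ℕ) :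
    ∃ N : ℕ, ∀ w : C → ℝ, M.map (Int.cast : ℤ → ℝ) *ᵥ w = 0 → ∀ j, (N : ℝ) < |w j| →
      ∃ u : C → ℤ, M *ᵥ u = 0 ∧ (∀ c, |u c| ≤ N) ∧ u j ≠ 0 ∧
        ConformalTo ((K : ℝ) • fun c => (u c : ℝ)) w := by
  obtain ⟨L, hL⟩ := exists_bounded_int_mulVec_eq_zero M
  refine ⟨(K * 2 ^ Nat.card C + 1) * L, fun w hw j hj => ?_⟩
  obtain ⟨y, hfy, hyw, hbasic⟩ := exists_isBasicSolution
    ((M.map (Int.cast : ℤ → ℝ)).mulVecLin.prod (LinearMap.proj j)) w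
  obtain ⟨hyker, hyj⟩ : M.map (Int.cast : ℤ → ℝ) *ᵥ y = 0 ∧ y j = w j := by
    simpa [hw] using hfy
  have hwj : 0 < |w j| := (Nat.cast_nonneg _).trans_lt hj
  have hyj₀ : y j ≠ 0 := hyj ▸ abs_pos.mp hwj
  obtain ⟨v, hvker, hvj, hvsupp, hvL⟩ := hL y hyker j hyj₀
  have hvy : (fun c => (v c : ℝ)) = (v j / y j) • y := by
    refine sub_eq_zero.mp <| hbasic _ ?_ fun c hc => by simp [hc, hvsupp c hc]
    simp [mulVec_sub, mulVec_smul, map_intCast_mulVec_eq_zero_iff.mpr hvker, hyker, hyj₀]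
  have hratio : 0 < v j / y j := by
    rw [← mul_div_mul_right _ _ hyj₀]
    exact div_pos hvj (mul_self_pos.mpr hyj₀)
  have hcoef : K * (v j / y j) * 2 ^ Nat.card C ≤ 1 := by
    have hvjL : |(v j : ℝ)| ≤ L := by exact_mod_cast hvL j
    rw [← abs_of_pos hratio, abs_div, hyj, mul_div_assoc', div_mul_eq_mul_div,
      div_le_one₀ hwj]
    push_cast at hj
    nlinarith [mul_le_mul_of_nonneg_left hvjL (by positivity : (0 : ℝ) ≤ K * 2 ^ Nat.card C)]
  refine ⟨v, hvker, fun c => (hvL c).trans ?_, fun h => by simp [h] at hvj, ?_⟩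
  · exact_mod_cast Nat.le_mul_of_pos_left L (Nat.succ_pos _)
  · rw [hvy, smul_smul]
    refine (hyw.smul _).trans ?_
    rw [smul_smul]
    simpa using ConformalTo.smul_self_of_le (by positivity) hcoef w

end IntegralKernel

/-! ### Two-stage matrices -/

section TwoStage

variable {B B' K G L α : Type*}

/-- The position, among the columns of a 2-stage matrix, of the columns that meet block `i`. -/
def blockCol (i : B) : G ⊕ L → G ⊕ B × L := Sum.map id (Prod.mk i)

/-- The effect on columns of identifying blocks of a 2-stage matrix along `ρ`. -/
def mergeCol (ρ : B → B') : G ⊕ B × L → G ⊕ B' × L := Sum.map id (Prod.map ρ id)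

/-- The 2-stage matrix with blocks `T i`; each block is given together with its global columns, so
`T i` is the paper's `(Aᵢ Bᵢ)`. -/
def twoStage [DecidableEq B] [Zero α] (T : B → Matrix K (G ⊕ L) α) :
    Matrix (B × K) (G ⊕ B × L) α :=
  of fun p => Sum.elim (fun j => T p.1 p.2 (Sum.inl j))
    fun d => if d.1 = p.1 then T p.1 p.2 (Sum.inr d.2) else 0

theorem eq_twoStage [DecidableEq B] [Zero α] {E : Matrix (B × K) (G ⊕ B × L) α}
    (hE : ∀ i k j l, j ≠ i → E (i, k) (Sum.inr (j, l)) = 0) :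
    E = twoStage fun i => E.submatrix (Prod.mk i) (blockCol i) := by
  ext ⟨i, k⟩ (j | ⟨i', l⟩)
  · rfl
  · by_cases h : i' = i
    · subst h
      simp [twoStage, blockCol]
    · simp [twoStage, h, hE i k i' l h]

theorem twoStage_map [DecidableEq B] [Zero α] {β : Type*} [Zero β]
    (T : B → Matrix K (G ⊕ L) α) {f : α → β} (hf : f 0 = 0) :
    (twoStage T).map f = twoStage fun i => (T i).map f := by
  ext ⟨i, k⟩ (j | ⟨i', l⟩)
  · rfl
  · simp [twoStage, apply_ite f, hf]

theorem exists_comp_mergeCol_eq {ρ : B → B'} (hρ : Surjective ρ) {w : G ⊕ B × L → α}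
    (hw : ∀ i i', ρ i = ρ i' → w ∘ blockCol i = w ∘ blockCol i') :
    ∃ z : G ⊕ B' × L → α, z ∘ mergeCol ρ = w := by
  refine ⟨Sum.elim (w ∘ Sum.inl) fun d => w (Sum.inr (surjInv hρ d.1, d.2)), ?_⟩
  ext (j | ⟨i, l⟩)
  · rfl
  · exact congrFun (hw _ i (surjInv_eq hρ (ρ i))) (Sum.inr l)

variable [Fintype B] [Fintype B'] [DecidableEq B] [DecidableEq B'] [Fintype G] [Fintype L]

theorem twoStage_mulVec_apply [NonUnitalNonAssocSemiring α] (T : B → Matrix K (G ⊕ L) α)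
    (w : G ⊕ B × L → α) (i : B) (k : K) :
    (twoStage T *ᵥ w) (i, k) = (T i *ᵥ (w ∘ blockCol i)) k := by
  simp only [mulVec, dotProduct, Fintype.sum_sum_type, Fintype.sum_prod_type]
  congr 1
  rw [Fintype.sum_eq_single i fun i' hi' => Finset.sum_eq_zero fun l _ => by simp [twoStage, hi']]
  simp [twoStage, blockCol]

theorem twoStage_mulVec_eq_zero_iff [NonUnitalNonAssocSemiring α] {T : B → Matrix K (G ⊕ L) α}
    {w : G ⊕ B × L → α} : twoStage T *ᵥ w = 0 ↔ ∀ i, T i *ᵥ (w ∘ blockCol i) = 0 := by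
  simp only [funext_iff, Prod.forall, twoStage_mulVec_apply, Pi.zero_apply]

theorem twoStage_comp_mulVec_mergeCol_eq_zero_iff [NonUnitalNonAssocSemiring α]
    {T : B' → Matrix K (G ⊕ L) α} {w : G ⊕ B' × L → α} {ρ : B → B'} (hρ : Surjective ρ) :
    twoStage (T ∘ ρ) *ᵥ (w ∘ mergeCol ρ) = 0 ↔ twoStage T *ᵥ w = 0 := by
  have hcol : ∀ i, w ∘ mergeCol ρ ∘ blockCol i = w ∘ blockCol (ρ i) := fun i => by
    ext (j | l) <;> rfl
  simp only [twoStage_mulVec_eq_zero_iff, comp_assoc, hcol, Function.comp_apply, hρ.forall]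

end TwoStage

/-! ### Merging blocks -/

section Merge

variable {B K G L : Type*} [Fintype B] [DecidableEq B] [Fintype G] [Fintype L]

theorem exists_isBasicSolution_twoStage {T : B → Matrix K (G ⊕ L) ℝ} {w : G ⊕ B × L → ℝ}
    (hw : twoStage T *ᵥ w = 0) (s : Set B) :
    ∃ w' : G ⊕ B × L → ℝ, twoStage T *ᵥ w' = 0 ∧ w' ∘ Sum.inl = w ∘ Sum.inl ∧
      ConformalTo w' ((2 : ℝ) ^ Nat.card (G ⊕ L) • w) ∧
      (∀ i ∈ s, w' ∘ blockCol i = w ∘ blockCol i) ∧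
      ∀ i ∉ s, IsBasicSolution ((T i).mulVecLin.prod (LinearMap.funLeft ℝ ℝ Sum.inl))
        (w' ∘ blockCol i) := by
  have hpow : (1 : ℝ) ≤ 2 ^ Nat.card (G ⊕ L) := one_le_pow₀ one_le_two
  let f (i : B) := (T i).mulVecLin.prod (LinearMap.funLeft ℝ ℝ (Sum.inl : G → G ⊕ L))
  have hblock (i : B) : ∃ y, f i y = f i (w ∘ blockCol i) ∧
      ConformalTo y ((2 : ℝ) ^ Nat.card (G ⊕ L) • (w ∘ blockCol i)) ∧
      (i ∈ s → y = w ∘ blockCol i) ∧ (i ∉ s → IsBasicSolution (f i) y) := by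
    by_cases hi : i ∈ s
    · exact ⟨_, rfl, .self_smul hpow _, fun _ => rfl, fun h => (h hi).elim⟩
    · obtain ⟨y, hfy, hyw, hy⟩ := exists_isBasicSolution (f i) (w ∘ blockCol i)
      exact ⟨y, hfy, hyw, fun h => (hi h).elim, fun _ => hy⟩
  choose y hfy hyw hys hybasic using hblock
  let w' : G ⊕ B × L → ℝ := Sum.elim (w ∘ Sum.inl) fun d => y d.1 (Sum.inr d.2)
  have hw' (i : B) : w' ∘ blockCol i = y i := by
    ext (j | l)
    exacts [(congrFun (congrArg Prod.snd (hfy i)) j).symm, rfl]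
  refine ⟨w', twoStage_mulVec_eq_zero_iff.mpr fun i => ?_, rfl, ?_,
    fun i hi => (hw' i).trans (hys i hi), fun i hi => (hw' i).symm ▸ hybasic i hi⟩
  · rw [hw']
    exact (congrArg Prod.fst (hfy i)).trans (twoStage_mulVec_eq_zero_iff.mp hw i)
  · rintro (j | ⟨i, l⟩)
    exacts [ConformalTo.self_smul hpow w (Sum.inl j), hyw i (Sum.inr l)]

/- A basic solution is determined by its block, its support and the global part. The block of `c₀`
is left alone, to keep the value at `c₀`, and marked by `none`. -/
theorem exists_mergeable_conformalTo {T : B → Matrix K (G ⊕ L) ℝ} {w : G ⊕ B × L → ℝ}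
    (hw : twoStage T *ᵥ w = 0) (c₀ : G ⊕ B × L) :
    ∃ (w' : G ⊕ B × L → ℝ) (τ : B → Option (Set (G ⊕ L))), twoStage T *ᵥ w' = 0 ∧
      w' c₀ = w c₀ ∧ ConformalTo w' ((2 : ℝ) ^ Nat.card (G ⊕ L) • w) ∧
      ∀ i i', T i = T i' → τ i = τ i' → w' ∘ blockCol i = w' ∘ blockCol i' := by
  classical
  let s : Set B := {i | ∃ l, c₀ = Sum.inr (i, l)}
  obtain ⟨w', hker, hglobal, hconf, hs, hbasic⟩ := exists_isBasicSolution_twoStage hw s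
  have hblockker := twoStage_mulVec_eq_zero_iff.mp hker
  refine ⟨w', fun i => if i ∈ s then none else some (support (w' ∘ blockCol i)), hker, ?_, hconf,
    fun i i' hT hτ => ?_⟩
  · rcases c₀ with j | ⟨i, l⟩
    exacts [congrFun hglobal j, congrFun (hs i ⟨l, rfl⟩) (Sum.inr l)]
  · by_cases hi : i ∈ s <;> by_cases hi' : i' ∈ s <;> simp only [hi, hi', if_true, if_false,
      reduceCtorEq, Option.some.injEq] at hτ
    · obtain ⟨⟨l, hl⟩, ⟨l', hl'⟩⟩ := And.intro hi hi'
      rw [show i = i' from congrArg Prod.fst (Sum.inr_injective (hl.symm.trans hl'))]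
    · refine (hbasic i' hi').eq_of_map_eq (Prod.ext ?_ rfl) fun c hc => ?_
      · exact (hT ▸ hblockker i).trans (hblockker i').symm
      · exact notMem_support.mp (hτ ▸ notMem_support.mpr hc)

end Merge

theorem exists_int_conformalTo_twoStage_of_lt_abs {Q K G L : Type*} [Finite Q] [Fintype G]
    [Fintype L] (T : Q → Matrix K (G ⊕ L) ℤ) :
    ∃ N : ℕ, ∀ {B : Type*} [Fintype B] [DecidableEq B] (π : B → Q) {w : G ⊕ B × L → ℝ},
      (twoStage (T ∘ π)).map (Int.cast : ℤ → ℝ) *ᵥ w = 0 → ∀ c₀, (N : ℝ) < |w c₀| →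
      ∃ u : G ⊕ B × L → ℤ, twoStage (T ∘ π) *ᵥ u = 0 ∧ (∀ c, |u c| ≤ N) ∧ u c₀ ≠ 0 ∧
        ConformalTo (fun c => (u c : ℝ)) w := by
  classical
  have := Fintype.ofFinite (Q × Option (Set (G ⊕ L)))
  choose N hN using fun S : Set (Q × Option (Set (G ⊕ L))) =>
    exists_int_conformalTo_of_lt_abs (twoStage fun q : S => T q.1.1) (2 ^ Nat.card (G ⊕ L))
  obtain ⟨N', hN'⟩ := Finite.exists_le N
  refine ⟨N', fun {B} _ _ π w hw c₀ hc₀ => ?_⟩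
  rw [twoStage_map _ Int.cast_zero] at hw
  obtain ⟨w', τ, hw'ker, hw'c₀, hw'w, hmerge⟩ := exists_mergeable_conformalTo hw c₀
  obtain ⟨S, ρ, hρ, hπτ⟩ : ∃ (S : Set (Q × Option (Set (G ⊕ L)))) (ρ : B → S),
      Surjective ρ ∧ ∀ i, (ρ i : Q × Option (Set (G ⊕ L))) = (π i, τ i) :=
    ⟨_, Set.rangeFactorization _, Set.rangeFactorization_surjective, fun _ => rfl⟩
  obtain rfl : π = fun i => (ρ i).1.1 := funext fun i => by rw [hπτ]
  obtain rfl : τ = fun i => (ρ i).1.2 := funext fun i => by rw [hπτ]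
  obtain ⟨z, rfl⟩ := exists_comp_mergeCol_eq (w := w') hρ fun i i' h =>
    hmerge i i' (by simp only [Function.comp_apply, h]) (by simp only [h])
  have hzker : (twoStage fun q : S => T q.1.1).map (Int.cast : ℤ → ℝ) *ᵥ z = 0 := by
    rw [twoStage_map _ Int.cast_zero]
    exact (twoStage_comp_mulVec_mergeCol_eq_zero_iff hρ).mp hw'ker
  obtain ⟨u, huker, huN, huc₀, huz⟩ := hN S z hzker (mergeCol ρ c₀) <|
    (Nat.cast_le.mpr (hN' S)).trans_lt (by rwa [← hw'c₀] at hc₀)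
  refine ⟨u ∘ mergeCol ρ, (twoStage_comp_mulVec_mergeCol_eq_zero_iff hρ).mpr huker,
    fun c => (huN _).trans (by exact_mod_cast hN' S), huc₀, ?_⟩
  refine ConformalTo.of_smul (a := 2 ^ Nat.card (G ⊕ L)) (by positivity)
    (ConformalTo.trans (fun c => ?_) hw'w)
  simpa using huz (mergeCol ρ c)

/-! ### Mixed Graver bases -/

section MixedGraver

variable {R C : Type*} [Fintype C]

/-- A kernel vector to which no nonzero integral kernel vector other than itself is conformal. Every
mixed Graver basis element has this property, whatever the set of integral columns. -/
def IsIntegrallyMinimal (E : Matrix R C ℤ) (g : C → ℝ) : Prop :=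
  E.map (Int.cast : ℤ → ℝ) *ᵥ g = 0 ∧
    ∀ v : C → ℤ, E *ᵥ v = 0 → v ≠ 0 → ConformalTo (fun c => (v c : ℝ)) g → (fun c => (v c : ℝ)) = g

theorem IsCircuit.smul_eq_smul {A : Matrix R C ℤ} {g v : C → ℤ} (hg : IsCircuit A g)
    (hv : A *ᵥ v = 0) (hvg : ∀ c, g c = 0 → v c = 0) {i : C} (hi : g i ≠ 0) :
    g i • v = v i • g := by
  obtain ⟨-, hker, -, hsupp⟩ := hg
  by_contra hne
  set z : C → ℤ := g i • v - v i • g with hz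
  have hzker : A *ᵥ z = 0 := by
    rw [hz, mulVec_sub, mulVec_smul, mulVec_smul, hv, hker, smul_zero, smul_zero, sub_zero]
  refine hsupp (fun c => (z c : ℝ)) (fun h => hne ?_)
    (map_intCast_mulVec_eq_zero_iff.mpr hzker) ((Set.ssubset_iff_of_subset ?_).mpr ⟨i, ?_, ?_⟩)
  · exact sub_eq_zero.mp (funext fun c => Int.cast_eq_zero.mp (congrFun h c))
  · intro c hc hgc
    have hgc' : g c = 0 := by simpa using hgc
    exact hc (by simp [hz, hgc', hvg c hgc'])
  · simpa using hi
  · simp [hz, mul_comm]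

theorem IsCircuit.dvd_apply {A : Matrix R C ℤ} {g v : C → ℤ} (hg : IsCircuit A g)
    (hv : A *ᵥ v = 0) (hvg : ∀ c, g c = 0 → v c = 0) {i : C} (hi : g i ≠ 0) : g i ∣ v i := by
  have hdvd : (g i).natAbs ∣ Finset.univ.gcd fun j => (v i).natAbs * (g j).natAbs := by
    refine Finset.dvd_gcd fun j _ => ?_
    rw [← Int.natAbs_mul, Int.natAbs_dvd_natAbs]
    exact ⟨v j, (congrFun (hg.smul_eq_smul hv hvg hi) j).symm⟩
  rw [Finset.gcd_mul_left, hg.2.2.1] at hdvd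
  simpa [Int.natAbs_dvd_natAbs] using hdvd

theorem IsCircuit.isIntegrallyMinimal {A : Matrix R C ℤ} {g : C → ℤ} (hg : IsCircuit A g) :
    IsIntegrallyMinimal A fun c => (g c : ℝ) := by
  refine ⟨map_intCast_mulVec_eq_zero_iff.mpr hg.2.1, fun v hv hv₀ hvg => ?_⟩
  have hsupp : ∀ c, g c = 0 → v c = 0 := fun c hc => by
    simpa using hvg.eq_zero (i := c) (by simpa using hc)
  obtain ⟨i, hvi⟩ := Function.ne_iff.mp hv₀
  have hgi : g i ≠ 0 := mt (hsupp i) hvi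
  obtain ⟨habs : |(v i : ℝ)| ≤ |(g i : ℝ)|, hsign : 0 ≤ (v i : ℝ) * g i⟩ := hvg i
  norm_cast at habs hsign
  have hvgi : v i = g i := by
    have hle := Int.le_of_dvd (abs_pos.mpr hvi) ((abs_dvd_abs _ _).mpr (hg.dvd_apply hv hsupp hgi))
    rcases abs_eq_abs.mp (habs.antisymm hle) with h | h
    · exact h
    · rw [h] at hsign
      nlinarith [mul_self_pos.mpr hgi]
  have hvg_eq : v = g := smul_right_injective _ hgi <| by
    simpa only [hvgi] using hg.smul_eq_smul hv hsupp hgi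
  rw [hvg_eq]

theorem submatrix_val_mulVec_of_eq_zero [DecidableEq C] {α : Type*} [NonUnitalNonAssocSemiring α]
    (A : Matrix R C α) {I : Finset C} {w : C → α} (hw : ∀ i ∈ I, w i = 0) :
    A.submatrix id (Subtype.val : {i : C // i ∉ I} → C) *ᵥ (w ∘ Subtype.val) = A *ᵥ w := by
  ext p
  simp only [mulVec, dotProduct, submatrix_apply, id, Function.comp_apply]
  rw [← Finset.sum_subtype Iᶜ (fun _ => Finset.mem_compl) fun c => A p c * w c]
  exact Finset.sum_subset (Finset.subset_univ _) fun c _ hc => by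
    rw [hw c (by simpa using hc), mul_zero]

theorem IsIntegrallyMinimal.of_submatrix [DecidableEq C] {E : Matrix R C ℤ} {I : Finset C}
    {g : C → ℝ} (hI : ∀ i ∈ I, g i = 0)
    (hg : IsIntegrallyMinimal (E.submatrix id (Subtype.val : {i : C // i ∉ I} → C))
      (g ∘ Subtype.val)) :
    IsIntegrallyMinimal E g := by
  obtain ⟨hker, hmin⟩ := hg
  refine ⟨?_, fun v hv hv₀ hvg => ?_⟩
  · rwa [← submatrix_map, submatrix_val_mulVec_of_eq_zero _ hI] at hker
  have hvI : ∀ i ∈ I, v i = 0 := fun i hi => by simpa using hvg.eq_zero (hI i hi)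
  have hvg_eq := hmin (v ∘ Subtype.val) (by rwa [submatrix_val_mulVec_of_eq_zero _ hvI])
    (fun h => hv₀ ?_) fun c => hvg c
  · ext c
    by_cases hc : c ∈ I
    · simp [hvI c hc, hI c hc]
    · exact congrFun hvg_eq ⟨c, hc⟩
  · ext c
    by_cases hc : c ∈ I
    · exact hvI c hc
    · exact congrFun h ⟨c, hc⟩

theorem InMixedGraver.isIntegrallyMinimal [DecidableEq C] {E : Matrix R C ℤ} {I : Finset C}
    {g : C → ℝ} (hg : InMixedGraver E I g) : IsIntegrallyMinimal E g := by
  rcases hg with ⟨⟨hker, -⟩, -, hmin⟩ | ⟨hI, gz, hgz, hcirc⟩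
  · refine ⟨hker, fun v hv hv₀ hvg => ?_⟩
    by_contra hne
    refine hmin _ ⟨map_intCast_mulVec_eq_zero_iff.mpr hv, fun i _ => ⟨v i, rfl⟩⟩ ?_ hne hvg
    exact fun h => hv₀ (funext fun c => by simpa using congrFun h c)
  · refine IsIntegrallyMinimal.of_submatrix hI ?_
    convert hcirc.isIntegrallyMinimal using 1
    exact funext hgz

end MixedGraver

theorem abs_le_matNormInf {R C : Type*} [Fintype R] [Fintype C] (E : Matrix R C ℤ) (p : R) (c : C) :
    |E p c| ≤ matNormInf E := by
  rw [Int.abs_eq_natAbs]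
  exact_mod_cast Finset.le_sup (f := fun p : R × C => (E p.1 p.2).natAbs) (Finset.mem_univ (p, c))

theorem finite_setOf_abs_le {R C : Type*} [Finite R] [Finite C] (Δ : ℤ) :
    {M : Matrix R C ℤ | ∀ p c, |M p c| ≤ Δ}.Finite :=
  Set.Finite.pi' fun _ => Set.Finite.pi' fun _ =>
    (Set.finite_Icc (-Δ) Δ).subset fun _ => abs_le.mp

theorem twoStage_mixedGraver_norm_bound_general (K G L : Type*) [Finite K] [Fintype G] [Fintype L]
    (Δ : ℕ) :
    ∃ N : ℕ, ∀ {B : Type*} [Fintype B] (E : Matrix (B × K) (G ⊕ B × L) ℤ),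
      (∀ i k j l, j ≠ i → E (i, k) (Sum.inr (j, l)) = 0) → (∀ p c, |E p c| ≤ Δ) →
      ∀ g : G ⊕ B × L → ℝ, IsIntegrallyMinimal E g → ∀ c, |g c| ≤ N := by
  classical
  have := (finite_setOf_abs_le (R := K) (C := G ⊕ L) Δ).to_subtype
  obtain ⟨N, hN⟩ := exists_int_conformalTo_twoStage_of_lt_abs
    (Subtype.val : {M : Matrix K (G ⊕ L) ℤ | ∀ p c, |M p c| ≤ Δ} → _)
  refine ⟨N, fun {B} _ E hE hΔ g ⟨hker, hmin⟩ c => ?_⟩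
  obtain ⟨T, rfl⟩ : ∃ T : B → {M : Matrix K (G ⊕ L) ℤ | ∀ p c, |M p c| ≤ Δ},
      E = twoStage (Subtype.val ∘ T) :=
    ⟨fun i => ⟨E.submatrix (Prod.mk i) (blockCol i), fun _ _ => hΔ _ _⟩, eq_twoStage hE⟩
  by_contra! hlarge
  obtain ⟨u, huker, huN, huc, hug⟩ := hN T hker c hlarge
  have hgu := hmin u huker (fun h => huc (congrFun h c)) hug
  have hucN : |(u c : ℝ)| ≤ N := by exact_mod_cast huN c
  exact hlarge.not_ge (hgu ▸ hucN)

/-- the `∞`-norm of mixed Graver basis elements of a 2-stage stochastic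
matrix is bounded by a function of the block dimensions `r, s, t` and `‖E‖∞` alone,
independently of the number `n` of blocks. -/
theorem twoStage_mixedGraver_norm_bound :
    ∃ h : ℕ → ℕ → ℕ → ℕ → ℕ,
      ∀ (n r s t : ℕ) (E : Matrix (Fin n × Fin t) (Fin r ⊕ Fin n × Fin s) ℤ),
        (∀ (i : Fin n) (k : Fin t) (j : Fin n) (l : Fin s),
          j ≠ i → E (i, k) (Sum.inr (j, l)) = 0) →
        ∀ (I : Finset (Fin r ⊕ Fin n × Fin s)) (g : Fin r ⊕ Fin n × Fin s → ℝ),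
          InMixedGraver E I g →
          ∀ c, |g c| ≤ (h r s t (matNormInf E) : ℝ) := by
  choose N hN using fun r s t => twoStage_mixedGraver_norm_bound_general (Fin t) (Fin r) (Fin s)
  exact ⟨N, fun n r s t E hE I g hg =>
    hN r s t _ E hE (abs_le_matNormInf E) g hg.isIntegrallyMinimal⟩
end
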